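/- Let K be a field, A = K[x_1, ..., x_n], and F ∈ A^{l×m} with rank(F) = r > 0 and d_r(F) = p^t (up to a unit), where p ∈ K[x_1] is an irreducible polynomial and t is a positive integer. Assume the Smith form of F is the block matrix with diag(p^{s_1}, ..., p^{s_r}) in the upper-left r × r corner and zeros elsewhere, with s_1 ≤ ... ≤ s_r. Then F is equivalent to its Smith form if and only if J_i(F) = A for all i = 1, ..., r. -/

import Mathlib

/-- Two `l × m` matrices over a commutative ring are equivalent if they differ by
left/right multiplication by square matrices with unit determinant. -/
def MatrixEquiv {B : Type*} [CommRing B] {l m : ℕ}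
    (F G : Matrix (Fin l) (Fin m) B) : Prop :=
  ∃ (U : Matrix (Fin l) (Fin l) B) (V : Matrix (Fin m) (Fin m) B),
    IsUnit U.det ∧ IsUnit V.det ∧ F = U * G * V

/-- The set of all `i × i` minors of a matrix. -/
def minorsSet {R : Type*} [CommRing R] {l m : ℕ} (i : ℕ)
    (F : Matrix (Fin l) (Fin m) R) : Set R :=
  {a | ∃ (f : Fin i → Fin l) (g : Fin i → Fin m),
      StrictMono f ∧ StrictMono g ∧ a = (F.submatrix f g).det}

/-- `d` is a greatest common divisor of the set `s`. -/
def IsGcdOf {R : Type*} [CommRing R] (d : R) (s : Set R) : Prop :=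
  (∀ a ∈ s, d ∣ a) ∧ ∀ c : R, (∀ a ∈ s, c ∣ a) → c ∣ d

/-- `J_i(F) = A`: letting `d` be a gcd of the `i × i` minors of `F`, the `i × i`
reduced minors (the minors divided by `d`) generate the unit ideal. -/
def ReducedMinorsUnitIdeal {R : Type*} [CommRing R] {l m : ℕ} (i : ℕ)
    (F : Matrix (Fin l) (Fin m) R) : Prop :=
  ∃ d : R, IsGcdOf d (minorsSet i F) ∧
    Ideal.span {b : R | d * b ∈ minorsSet i F} = ⊤

/-- The image of a univariate polynomial `p ∈ K[x₁]` in `A = K[x₁, …, x_{n+1}]`,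
sending the variable to `x₁` (the variable of index `0`). -/
noncomputable def polyImage {K : Type*} [CommRing K] (n : ℕ) (p : Polynomial K) :
    MvPolynomial (Fin (n + 1)) K :=
  Polynomial.aeval (MvPolynomial.X 0) p

/-!
The condition `J_i(F) = A` says that the ideal of `i × i` minors of `F` is principal, generated by
`p ^ (s₁ + ⋯ + s_i)`. Equivalent matrices have the same ideals of minors, which gives one direction.
For the converse divide `F` by `p ^ s₁`, so that `s₁ = 0`. Modulo `p`, which involves only the first
variable, `F` then has positive rank `k` over the polynomial ring `(K[x₁]/p)[x₂, …, xₙ]`, and its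
`k × k` minors generate the unit ideal. By the Quillen–Suslin theorem the image of `F` modulo `p` is
a free direct summand, so some combination of the columns is unimodular modulo `p`. The hypothesis
on the `r × r` minors gives `F = N * M` with `N` a split monomorphism and the cokernel of `M` killed
by `p ^ t`. Suslin's reduction of unimodular vectors to the first unit vector can be carried out
with matrices of determinant one that lift to `A`, and this lets the combination of columns be
corrected to one that is unimodular over `A`. Completing it to an invertible matrix splits a `1` off
`F`, and induction on `r` finishes the proof.
-/

universe u v

/-! ### Finite free resolutions -/

section FiniteFreeResolution

/-- `M` has a resolution of length at most `n` by finite free `R`-modules; the kernel of the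
augmentation is recorded up to isomorphism, so that the notion is visibly invariant under
isomorphisms. -/
def HasFiniteFreeResolution (R : Type u) [CommRing R] :
    ℕ → ∀ (M : Type u) [AddCommGroup M] [Module R M], Prop
  | 0, M, _, _ => Module.Finite R M ∧ Module.Free R M
  | n + 1, M, _, _ => ∃ (N F : Type u) (_ : AddCommGroup N) (_ : Module R N)
      (_ : AddCommGroup F) (_ : Module R F) (i : N →ₗ[R] F) (f : F →ₗ[R] M),
      Module.Finite R F ∧ Module.Free R F ∧ Function.Injective i ∧ Function.Exact i f ∧
        Function.Surjective f ∧ HasFiniteFreeResolution R n N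

namespace HasFiniteFreeResolution

variable {R : Type u} [CommRing R] {n : ℕ}

theorem succ {M : Type u} [AddCommGroup M] [Module R M] (h : HasFiniteFreeResolution R n M) :
    HasFiniteFreeResolution R (n + 1) M := by
  induction n generalizing M with
  | zero =>
    obtain ⟨_, _⟩ := h
    refine ⟨PUnit, M, inferInstance, inferInstance, inferInstance, inferInstance, 0, .id,
      inferInstance, inferInstance, fun _ _ _ => rfl, fun x => ?_, fun x => ⟨x, rfl⟩,
      inferInstance, inferInstance⟩
    simp [eq_comm]
  | succ n ih =>
    obtain ⟨N, F, _, _, _, _, i, f, h1, h2, hi, hif, hf, hN⟩ := h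
    exact ⟨N, F, _, _, _, _, i, f, h1, h2, hi, hif, hf, ih hN⟩

theorem mono {m : ℕ} (hnm : n ≤ m) {M : Type u} [AddCommGroup M] [Module R M]
    (h : HasFiniteFreeResolution R n M) : HasFiniteFreeResolution R m M := by
  induction m, hnm using Nat.le_induction with
  | base => exact h
  | succ m _ ih => exact ih.succ

theorem extension {A B C : Type u} [AddCommGroup A] [Module R A] [AddCommGroup B]
    [Module R B] [AddCommGroup C] [Module R C] {j : A →ₗ[R] B} {q : B →ₗ[R] C}
    (hj : Function.Injective j) (hjq : Function.Exact j q) (hq : Function.Surjective q)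
    (hA : HasFiniteFreeResolution R n A) (hC : HasFiniteFreeResolution R n C) :
    HasFiniteFreeResolution R n B := by
  induction n generalizing A B C with
  | zero =>
    obtain ⟨_, _⟩ := hA
    obtain ⟨_, _⟩ := hC
    obtain ⟨g, hg⟩ := q.exists_rightInverse_of_surjective (LinearMap.range_eq_top.2 hq)
    obtain ⟨e, -, -⟩ := hjq.splitSurjectiveEquiv hj ⟨g, hg⟩
    exact ⟨.equiv e.symm, .of_equiv e.symm⟩
  | succ n ih =>
    obtain ⟨N, F, _, _, _, _, i, f, _, _, hi, hif, hf, hN⟩ := hA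
    obtain ⟨N', F', _, _, _, _, i', f', _, _, hi', hif', hf', hN'⟩ := hC
    obtain ⟨g, hg⟩ := Module.projective_lifting_property q f' hq
    have hg (x) : q (g x) = f' x := congr($hg x)
    have hjf (x) : q (j (f x)) = 0 := (hjq _).2 ⟨_, rfl⟩
    -- the horseshoe lemma: `F × F'` covers `B`, with kernel an extension of `N'` by `N`
    let β : F × F' →ₗ[R] B := (j ∘ₗ f).coprod g
    have hβ (k : F × F') : β k = j (f k.1) + g k.2 := rfl
    have hker (k : LinearMap.ker β) : k.1.2 ∈ LinearMap.range i' := by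
      have hk : j (f k.1.1) + g k.1.2 = 0 := k.2
      refine (hif' _).1 ?_
      simpa [hg, hjf] using congr(q $hk)
    let ι : N →ₗ[R] LinearMap.ker β := (LinearMap.inl R F F' ∘ₗ i).codRestrict _ fun x => by
      simp [hβ, hif.apply_apply_eq_zero]
    let π : LinearMap.ker β →ₗ[R] N' := LinearMap.codRestrictOfInjective
      (LinearMap.snd R F F' ∘ₗ (LinearMap.ker β).subtype) i' hi' hker
    have hπ (k) : i' (π k) = k.1.2 := LinearMap.codRestrictOfInjective_comp_apply _ _ _ _ k
    refine ⟨LinearMap.ker β, F × F', _, _, _, _, (LinearMap.ker β).subtype, β, inferInstance,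
      inferInstance, Subtype.val_injective, LinearMap.exact_subtype_ker_map β, fun b => ?_,
      ih (j := ι) (q := π) (fun x y hxy => hi congr(($hxy).1.1)) (fun k => ?_) (fun y => ?_)
        hN hN'⟩
    · obtain ⟨y, hy⟩ := hf' (q b)
      obtain ⟨a, ha⟩ := (hjq (b - g y)).1 (by rw [map_sub, hg, hy, sub_self])
      obtain ⟨x, rfl⟩ := hf a
      exact ⟨(x, y), by rw [hβ, ha, sub_add_cancel]⟩
    · rw [← hi'.eq_iff, map_zero, hπ]
      refine ⟨fun hk => ?_, fun ⟨x, hx⟩ => hx ▸ rfl⟩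
      have hk0 : j (f k.1.1) + g k.1.2 = 0 := k.2
      rw [hk, map_zero, add_zero, map_eq_zero_iff j hj] at hk0
      obtain ⟨x, hx⟩ := (hif _).1 hk0
      exact ⟨x, Subtype.ext (Prod.ext hx hk.symm)⟩
    · obtain ⟨a, ha⟩ := (hjq (g (i' y))).1 (by rw [hg, hif'.apply_apply_eq_zero])
      obtain ⟨x, rfl⟩ := hf a
      exact ⟨⟨(-x, i' y), by simp [hβ, ha]⟩, hi' (hπ _)⟩

theorem cokernel {A B C : Type u} [AddCommGroup A] [Module R A] [AddCommGroup B]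
    [Module R B] [AddCommGroup C] [Module R C] {j : A →ₗ[R] B} {q : B →ₗ[R] C}
    (hj : Function.Injective j) (hjq : Function.Exact j q) (hq : Function.Surjective q)
    (hA : HasFiniteFreeResolution R n A) (hB : HasFiniteFreeResolution R n B) :
    HasFiniteFreeResolution R (n + 1) C := by
  obtain ⟨N, F, _, _, _, _, i, f, _, _, hi, hif, hf, hN⟩ := hB.succ
  -- the kernel of `F → B → C` is an extension of `A` by `N`
  let K := LinearMap.ker (q ∘ₗ f)
  let ι : N →ₗ[R] K := i.codRestrict K fun x => by simp [K, hif.apply_apply_eq_zero]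
  let π : K →ₗ[R] A := LinearMap.codRestrictOfInjective (f ∘ₗ K.subtype) j hj
    fun k => (hjq _).1 k.2
  have hπ (k) : j (π k) = f k := LinearMap.codRestrictOfInjective_comp_apply _ _ _ _ k
  refine ⟨K, F, _, _, _, _, K.subtype, q ∘ₗ f, inferInstance, inferInstance,
    Subtype.val_injective, LinearMap.exact_subtype_ker_map _, hq.comp hf,
    extension (j := ι) (q := π) (fun x y hxy => hi congr(($hxy).1)) (fun k => ?_) (fun a => ?_)
      hN hA⟩
  · rw [← hj.eq_iff, map_zero, hπ, hif]
    exact exists_congr fun x => ⟨fun hx => Subtype.ext hx, fun hx => congr(($hx).1)⟩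
  · obtain ⟨x, hx⟩ := hf (j a)
    exact ⟨⟨x, by simp [K, hx, hjq.apply_apply_eq_zero]⟩, hj ((hπ _).trans hx)⟩

theorem isStablyFree {M : Type u} [AddCommGroup M] [Module R M] [Module.Projective R M]
    (h : HasFiniteFreeResolution R n M) : Module.IsStablyFree R M := by
  induction n generalizing M with
  | zero =>
    obtain ⟨_, _⟩ := h
    infer_instance
  | succ n ih =>
    obtain ⟨N, F, _, _, _, _, i, f, _, _, hi, hif, hf, hN⟩ := h
    obtain ⟨g, hg⟩ := f.exists_rightInverse_of_surjective (LinearMap.range_eq_top.2 hf)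
    obtain ⟨e, he, -⟩ := hif.splitSurjectiveEquiv hi ⟨g, hg⟩
    have : Module.Projective R N := by
      refine Module.Projective.of_split i (LinearMap.fst R N M ∘ₗ e.toLinearMap) ?_
      rw [he]; ext; simp
    have : Module.Finite R N :=
      Module.Finite.of_surjective (LinearMap.fst R N M ∘ₗ e.toLinearMap)
        fun x => ⟨e.symm (x, 0), by simp⟩
    have := ih hN
    obtain ⟨G, _, _, _, _, _⟩ := Module.IsStablyFree.exist_free_prod R N
    have : Module.Free R (M × (N × G)) :=
      Module.Free.of_equiv (((e.trans (LinearEquiv.prodComm R N M)).prodCongr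
        (LinearEquiv.refl R G)).trans (LinearEquiv.prodAssoc R M N G))
    exact Module.IsStablyFree.of_free_prod R M (N × G)

end HasFiniteFreeResolution

end FiniteFreeResolution

/-! ### Finite free resolutions over a polynomial ring -/

section PolynomialModule

open Polynomial PolynomialModule

variable {R : Type*} [CommRing R] {M N : Type*} [AddCommGroup M] [Module R M] [AddCommGroup N]
  [Module R N]

instance finite_polynomialModule [Module.Finite R M] :
    Module.Finite R[X] (PolynomialModule R M) :=
  .equiv (polynomialTensorProductLEquivPolynomialModule R M)

instance free_polynomialModule [Module.Free R M] : Module.Free R[X] (PolynomialModule R M) :=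
  .of_equiv (polynomialTensorProductLEquivPolynomialModule R M)

theorem polynomialModule_coeff_sub (x y : PolynomialModule R M) :
    (x - y).coeff = x.coeff - y.coeff := rfl

/-- The functoriality of `PolynomialModule` in the module, as an `R[X]`-linear map. -/
noncomputable def polynomialModuleMap (f : M →ₗ[R] N) :
    PolynomialModule R M →ₗ[R[X]] PolynomialModule R N where
  __ := map R f
  map_smul' p q := by simpa using map_smul R f p q

theorem coeff_polynomialModuleMap (f : M →ₗ[R] N) (q : PolynomialModule R M) (k : ℕ) :
    (polynomialModuleMap f q).coeff k = f (q.coeff k) := rfl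

theorem polynomialModuleMap_injective {f : M →ₗ[R] N} (hf : Function.Injective f) :
    Function.Injective (polynomialModuleMap f) := fun x y hxy =>
  coeff_injective <| Finsupp.ext fun k => hf <| by
    rw [← coeff_polynomialModuleMap, hxy, coeff_polynomialModuleMap]

theorem polynomialModuleMap_surjective {f : M →ₗ[R] N} (hf : Function.Surjective f) :
    Function.Surjective (polynomialModuleMap f) := fun x =>
  have ⟨y, hy⟩ := Finsupp.mapRange_surjective f (map_zero f) hf x.coeff
  ⟨ofCoeff R y, coeff_injective hy⟩

theorem polynomialModuleMap_exact {P : Type*} [AddCommGroup P] [Module R P] {i : M →ₗ[R] N}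
    {f : N →ₗ[R] P} (hi : Function.Injective i) (hif : Function.Exact i f) :
    Function.Exact (polynomialModuleMap i) (polynomialModuleMap f) := by
  refine fun x => ⟨fun hx => ?_, ?_⟩
  · have hcoeff (k) : x.coeff k ∈ Set.range i := (hif _).1 <| by
      rw [← coeff_polynomialModuleMap, hx]; rfl
    choose y hy using hcoeff
    let z : ℕ →₀ M := Finsupp.onFinset x.coeff.support y fun k hk => by
      rw [Finsupp.mem_support_iff, ← hy]
      exact fun h0 => hk (hi (by rw [h0, map_zero]))
    exact ⟨ofCoeff R z, coeff_injective (Finsupp.ext hy)⟩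
  · rintro ⟨y, rfl⟩
    exact coeff_injective (Finsupp.ext fun k => hif.apply_apply_eq_zero (y.coeff k))

theorem HasFiniteFreeResolution.polynomialModule {R : Type u} [CommRing R] {n : ℕ} {M : Type u}
    [AddCommGroup M] [Module R M] (h : HasFiniteFreeResolution R n M) :
    HasFiniteFreeResolution R[X] n (PolynomialModule R M) := by
  induction n generalizing M with
  | zero =>
    obtain ⟨_, _⟩ := h
    exact ⟨inferInstance, inferInstance⟩
  | succ n ih =>
    obtain ⟨N, F, _, _, _, _, i, f, _, _, hi, hif, hf, hN⟩ := h
    exact ⟨PolynomialModule R N, PolynomialModule R F, _, _, _, _, polynomialModuleMap i,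
      polynomialModuleMap f, inferInstance, inferInstance, polynomialModuleMap_injective hi,
      polynomialModuleMap_exact hi hif, polynomialModuleMap_surjective hf, ih hN⟩

/-- The `R[X]`-linear map out of `PolynomialModule R M` extending an `R`-linear map on the
constants `M`. -/
noncomputable def polynomialModuleLift [Module R[X] N] [IsScalarTower R R[X] N]
    (f : M →ₗ[R] N) : PolynomialModule R M →ₗ[R[X]] N :=
  f.liftBaseChange R[X] ∘ₗ (polynomialTensorProductLEquivPolynomialModule R M).symm.toLinearMap

theorem polynomialModule_single_eq_X_pow_smul (k : ℕ) (m : M) :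
    single R k m = (X ^ k : R[X]) • single R 0 m := by
  rw [← monomial_one_right_eq_X_pow, monomial_smul_single, add_zero, one_smul]

theorem polynomialModuleLift_single [Module R[X] N] [IsScalarTower R R[X] N]
    (f : M →ₗ[R] N) (k : ℕ) (m : M) :
    polynomialModuleLift f (single R k m) = (X ^ k : R[X]) • f m := by
  have hsymm : (polynomialTensorProductLEquivPolynomialModule R M).symm (single R 0 m) =
      TensorProduct.tmul R 1 m := by
    rw [LinearEquiv.symm_apply_eq]
    simp [polynomialTensorProductLEquivPolynomialModule, lsingle]
  rw [polynomialModule_single_eq_X_pow_smul, LinearMap.map_smul]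
  simp [polynomialModuleLift, hsymm]

end PolynomialModule

section DegreeFiltration

open Polynomial PolynomialModule

variable {R : Type u} [CommRing R] {ι : Type} (K : Submodule R[X] (ι → R[X])) (d : ℕ)

/-- The `R`-module of vectors in `K` all of whose components have degree less than `d`. -/
def degreeLTPart : Submodule R (ι → R[X]) where
  carrier := {v | v ∈ K ∧ ∀ i k, d ≤ k → (v i).coeff k = 0}
  add_mem' ha hb := ⟨K.add_mem ha.1 hb.1, fun i k hk => by simp [ha.2 i k hk, hb.2 i k hk]⟩
  zero_mem' := ⟨K.zero_mem, by simp⟩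
  smul_mem' c x hx := ⟨by rw [← algebraMap_smul R[X] c x]; exact K.smul_mem _ hx.1,
    fun i k hk => by simp [hx.2 i k hk]⟩

theorem finite_degreeLTPart [IsNoetherianRing R] [Finite ι] :
    Module.Finite R (degreeLTPart K d) := by
  let coeffs : (ι → R[X]) →ₗ[R] (ι → Fin d → R) :=
    LinearMap.pi fun i => LinearMap.pi fun k => lcoeff R k ∘ₗ LinearMap.proj i
  refine .of_injective (coeffs ∘ₗ (degreeLTPart K d).subtype)
    fun x y hxy => Subtype.ext (funext fun i => Polynomial.ext fun k => ?_)
  rcases lt_or_ge k d with hk | hk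
  · exact congr($hxy i ⟨k, hk⟩)
  · rw [x.2.2 i k hk, y.2.2 i k hk]

theorem degreeLTPart_le_succ : degreeLTPart K d ≤ degreeLTPart K (d + 1) :=
  fun _ hv => ⟨hv.1, fun i k hk => hv.2 i k (by lia)⟩

/-- Multiplication by `X`, which raises the degree bound by one. -/
noncomputable def degreeLTPartMulX : degreeLTPart K d →ₗ[R] degreeLTPart K (d + 1) where
  toFun a := ⟨(X : R[X]) • a.1, K.smul_mem _ a.2.1, fun i k hk => by
    obtain ⟨k, rfl⟩ := Nat.exists_eq_succ_of_ne_zero (Nat.ne_zero_of_lt hk)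
    simpa using a.2.2 i k (by lia)⟩
  map_add' a b := Subtype.ext (by simp)
  map_smul' c a := Subtype.ext (smul_comm (X : R[X]) c a.1)

theorem degreeLTPartMulX_injective : Function.Injective (degreeLTPartMulX K d) := by
  refine fun a b hab => Subtype.ext (funext fun i => ?_)
  have hi : X * a.1 i = X * b.1 i := congr(($hab).1 i)
  exact isRegular_X.left hi

/-- The characteristic relations `T ⊗ a - 1 ⊗ X a` among the elements of bounded degree, where
`T` is the variable of the polynomial module. -/
noncomputable def charRel :
    PolynomialModule R (degreeLTPart K d) →ₗ[R[X]] PolynomialModule R (degreeLTPart K (d + 1)) :=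
  polynomialModuleLift (lsingle R 1 ∘ₗ Submodule.inclusion (degreeLTPart_le_succ K d) -
    lsingle R 0 ∘ₗ degreeLTPartMulX K d)

/-- The evaluation `T ↦ X` of formal polynomials with coefficients in `degreeLTPart K d`. -/
noncomputable def charEval : PolynomialModule R (degreeLTPart K d) →ₗ[R[X]] K :=
  polynomialModuleLift
    { toFun a := ⟨a.1, a.2.1⟩, map_add' _ _ := rfl, map_smul' _ _ := rfl }

theorem charEval_single (k : ℕ) (a : degreeLTPart K d) :
    (charEval K d (single R k a) : ι → R[X]) = (X ^ k : R[X]) • a.1 := by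
  rw [charEval, polynomialModuleLift_single]; rfl

theorem charRel_single (k : ℕ) (a : degreeLTPart K d) :
    charRel K d (single R k a) =
      single R (k + 1) (Submodule.inclusion (degreeLTPart_le_succ K d) a) -
        single R k (degreeLTPartMulX K d a) := by
  rw [charRel, polynomialModuleLift_single, LinearMap.sub_apply, smul_sub,
    polynomialModule_single_eq_X_pow_smul (k + 1), polynomialModule_single_eq_X_pow_smul k,
    pow_succ, mul_smul, ← pow_one (X : R[X]), ← polynomialModule_single_eq_X_pow_smul 1, pow_one]
  rfl

theorem charEval_charRel (x : PolynomialModule R (degreeLTPart K d)) :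
    charEval K (d + 1) (charRel K d x) = 0 := by
  induction x using PolynomialModule.induction_linear with
  | zero => simp
  | add x y hx hy => rw [map_add, map_add, hx, hy, add_zero]
  | single k a =>
    rw [charRel_single, map_sub]
    ext1
    simp only [AddSubgroupClass.coe_sub, charEval_single]
    simp [degreeLTPartMulX, pow_succ, smul_smul]

theorem coeff_charRel_zero (x : PolynomialModule R (degreeLTPart K d)) :
    (charRel K d x).coeff 0 = -degreeLTPartMulX K d (x.coeff 0) := by
  induction x using PolynomialModule.induction_linear with
  | zero => simp
  | add x y hx hy =>
    simp only [map_add, PolynomialModule.coeff_add, Finsupp.add_apply, hx, hy]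
    abel
  | single k a =>
    rw [charRel_single]
    simp only [polynomialModule_coeff_sub, Finsupp.sub_apply, coeff_single,
      Finsupp.single_apply]
    split_ifs <;> simp_all

theorem coeff_charRel_succ (x : PolynomialModule R (degreeLTPart K d)) (j : ℕ) :
    (charRel K d x).coeff (j + 1) =
      Submodule.inclusion (degreeLTPart_le_succ K d) (x.coeff j) -
        degreeLTPartMulX K d (x.coeff (j + 1)) := by
  induction x using PolynomialModule.induction_linear with
  | zero => simp
  | add x y hx hy =>
    simp only [map_add, PolynomialModule.coeff_add, Finsupp.add_apply, hx, hy]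
    abel
  | single k a =>
    rw [charRel_single]
    simp only [polynomialModule_coeff_sub, Finsupp.sub_apply, coeff_single,
      Finsupp.single_apply]
    split_ifs <;> simp_all

theorem charRel_injective : Function.Injective (charRel K d) := by
  rw [injective_iff_map_eq_zero]
  intro x hx
  refine coeff_injective (Finsupp.ext fun j => degreeLTPartMulX_injective K d ?_)
  induction j with
  | zero => simpa [hx] using (coeff_charRel_zero K d x).symm
  | succ j ih =>
    have hj : x.coeff j = 0 := degreeLTPartMulX_injective K d ih
    simpa [hx, hj] using (coeff_charRel_succ K d x j).symm

theorem charEval_eq_sum_range {N : ℕ} {y : PolynomialModule R (degreeLTPart K d)}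
    (hy : ∀ k, N ≤ k → y.coeff k = 0) :
    (charEval K d y : ι → R[X]) = ∑ k ∈ Finset.range N, (X ^ k : R[X]) • (y.coeff k).1 := by
  have hsum : y = ∑ k ∈ Finset.range N, single R k (y.coeff k) := by
    refine coeff_injective (Finsupp.ext fun j => ?_)
    rw [PolynomialModule.coeff_sum, Finsupp.finsetSum_apply]
    simp only [coeff_single, Finsupp.single_apply, Finset.sum_ite_eq', Finset.mem_range]
    split_ifs with hj
    · rfl
    · exact hy j (not_lt.1 hj)
  conv_lhs => rw [hsum]
  simp [charEval_single]

-- In `∑ k ≤ N, X ^ k y_k = 0` with `N > 0` only the term `k = N` contributes in degree `N + d`.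
theorem coeff_mem_degreeLTPart_of_charEval_eq_zero {N : ℕ}
    {y : PolynomialModule R (degreeLTPart K (d + 1))} (hev : charEval K (d + 1) y = 0)
    (hy : ∀ k, N + 1 < k → y.coeff k = 0) : (y.coeff (N + 1)).1 ∈ degreeLTPart K d := by
  have hsum := charEval_eq_sum_range K (d + 1) (N := N + 2) fun k hk => hy k (by lia)
  rw [hev, Finset.sum_range_succ] at hsum
  refine ⟨(y.coeff (N + 1)).2.1, fun i k hk => ?_⟩
  rcases hk.lt_or_eq with hk | rfl
  · exact (y.coeff (N + 1)).2.2 i k hk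
  have hlow : ∑ k ∈ Finset.range (N + 1),
      (X ^ k * (y.coeff k).1 i).coeff (d + (N + 1)) = 0 := by
    refine Finset.sum_eq_zero fun k hk => ?_
    rw [Finset.mem_range] at hk
    rw [coeff_X_pow_mul', if_pos (by lia)]
    exact (y.coeff k).2.2 i _ (by lia)
  have hi := congr(($hsum i).coeff (d + (N + 1)))
  simp only [Pi.add_apply, Finset.sum_apply, Pi.smul_apply, smul_eq_mul, Polynomial.coeff_add,
    finsetSum_coeff, hlow, coeff_X_pow_mul, zero_add] at hi
  exact hi.symm

theorem exact_charRel_charEval : Function.Exact (charRel K d) (charEval K (d + 1)) := by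
  intro y
  refine ⟨fun hev => ?_, fun ⟨x, hx⟩ => hx ▸ charEval_charRel K d x⟩
  obtain ⟨N, hN⟩ : ∃ N, ∀ k, N < k → y.coeff k = 0 :=
    ⟨y.coeff.support.sup id, fun k hk => Finsupp.notMem_support_iff.1 fun h =>
      hk.not_ge (Finset.le_sup (f := id) h)⟩
  induction N generalizing y with
  | zero =>
    have hsum := charEval_eq_sum_range K (d + 1) (N := 1) fun k hk => hN k hk
    have h0 : y.coeff 0 = 0 := Subtype.ext (by simpa [hev] using hsum.symm)
    refine ⟨0, coeff_injective (Finsupp.ext fun k => ?_)⟩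
    rcases k.eq_zero_or_pos with rfl | hk
    · simp [h0]
    · simp [hN k hk]
  | succ N ih =>
    have hmem := coeff_mem_degreeLTPart_of_charEval_eq_zero K d hev hN
    let z := single R N (⟨_, hmem⟩ : degreeLTPart K d)
    obtain ⟨x, hx⟩ := ih (y - charRel K d z) (by rw [map_sub, hev, charEval_charRel, sub_zero])
      fun k hk => by
        obtain ⟨k, rfl⟩ := Nat.exists_eq_succ_of_ne_zero (Nat.ne_zero_of_lt hk)
        rw [polynomialModule_coeff_sub, Finsupp.sub_apply, coeff_charRel_succ, coeff_single,
          Finsupp.single_apply, Finsupp.single_apply, if_neg (show N ≠ k + 1 by lia)]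
        split_ifs with h
        · subst h
          exact Subtype.ext (by simp)
        · simp [hN (k + 1) (by lia)]
    exact ⟨x + z, by rw [map_add, hx, sub_add_cancel]⟩

theorem exists_charEval_surjective [Finite ι] (hK : K.FG) :
    ∃ d, Function.Surjective (charEval K (d + 1)) := by
  obtain ⟨S, hS⟩ := hK
  have := Fintype.ofFinite ι
  let D := S.sup fun v => Finset.univ.sup fun i => (v i).natDegree
  have hD {v} (hv : v ∈ S) (i) : (v i).natDegree ≤ D :=
    (Finset.le_sup (f := fun i => (v i).natDegree) (Finset.mem_univ i)).trans
      (Finset.le_sup (f := fun v => Finset.univ.sup fun i => (v i).natDegree) hv)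
  have hle : K ≤ (LinearMap.range (charEval K (D + 1))).map K.subtype := by
    rw [← hS, Submodule.span_le, hS]
    intro v hv
    have hvK : v ∈ K := hS ▸ Submodule.subset_span hv
    have hv' : v ∈ degreeLTPart K (D + 1) :=
      ⟨hvK, fun i k hk => coeff_eq_zero_of_natDegree_lt ((hD hv i).trans_lt hk)⟩
    refine ⟨⟨v, hvK⟩, ⟨single R 0 ⟨v, hv'⟩, Subtype.ext ?_⟩, rfl⟩
    rw [charEval_single, pow_zero, one_smul]
  refine ⟨D, fun x => ?_⟩
  obtain ⟨z, ⟨y, rfl⟩, hz⟩ := hle x.2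
  exact ⟨y, Subtype.ext hz⟩

theorem exists_hasFiniteFreeResolution_submodule [IsNoetherianRing R] [Finite ι]
    (hR : ∀ (M : Type u) [AddCommGroup M] [Module R M] [Module.Finite R M],
      ∃ n, HasFiniteFreeResolution R n M) : ∃ n, HasFiniteFreeResolution R[X] n K := by
  obtain ⟨d, hd⟩ := exists_charEval_surjective K (IsNoetherian.noetherian K)
  have := finite_degreeLTPart K d
  have := finite_degreeLTPart K (d + 1)
  obtain ⟨n, hn⟩ := hR (degreeLTPart K d)
  obtain ⟨m, hm⟩ := hR (degreeLTPart K (d + 1))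
  exact ⟨_, .cokernel (charRel_injective K d) (exact_charRel_charEval K d) hd
    (hn.mono (le_max_left n m)).polynomialModule (hm.mono (le_max_right n m)).polynomialModule⟩

theorem exists_hasFiniteFreeResolution_polynomial [IsNoetherianRing R]
    (hR : ∀ (M : Type u) [AddCommGroup M] [Module R M] [Module.Finite R M],
      ∃ n, HasFiniteFreeResolution R n M) (M : Type u) [AddCommGroup M] [Module R[X] M]
    [Module.Finite R[X] M] : ∃ n, HasFiniteFreeResolution R[X] n M := by
  obtain ⟨m, f, hf⟩ := Module.Finite.exists_fin' R[X] M
  obtain ⟨n, hn⟩ := exists_hasFiniteFreeResolution_submodule (LinearMap.ker f) hR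
  exact ⟨n + 1, LinearMap.ker f, Fin m → R[X], _, _, _, _, (LinearMap.ker f).subtype, f,
    inferInstance, inferInstance, Subtype.val_injective, fun x => by simp, hf, hn⟩

end DegreeFiltration

/-! ### Unimodular vectors of polynomials -/

section UnimodularVectors

open Polynomial
open scoped Matrix

variable {ι κ : Type*} [Fintype ι] {R S : Type*} [CommRing R] [CommRing S]

/-- A vector is unimodular if its entries generate the unit ideal, that is, if some linear form
takes the value `1` on it. -/
def IsUnimodular (v : ι → R) : Prop := ∃ c : ι → R, c ⬝ᵥ v = 1

theorem isUnimodular_iff_span_range_eq_top {v : ι → R} :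
    IsUnimodular v ↔ Ideal.span (Set.range v) = ⊤ := by
  rw [Ideal.eq_top_iff_one, Ideal.mem_span_range_iff_exists_fun]
  rfl

namespace IsUnimodular

theorem map {v : ι → R} (hv : IsUnimodular v) (f : R →+* S) : IsUnimodular (f ∘ v) := by
  obtain ⟨c, hc⟩ := hv
  exact ⟨f ∘ c, by rw [← RingHom.map_dotProduct, hc, map_one]⟩

theorem of_mulVec [Fintype κ] {M : Matrix κ ι R} {v : ι → R} (h : IsUnimodular (M *ᵥ v)) :
    IsUnimodular v := by
  obtain ⟨c, hc⟩ := h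
  exact ⟨c ᵥ* M, by rw [← Matrix.dotProduct_mulVec, hc]⟩

theorem ne_zero [Nontrivial R] {v : ι → R} (hv : IsUnimodular v) : v ≠ 0 := by
  rintro rfl
  obtain ⟨c, hc⟩ := hv
  simp at hc

end IsUnimodular

theorem exists_comp_eq_and_apply_eq_zero {ι : Type*} {R S : Type*} [CommRing R] [CommRing S]
    {ψ : R →+* S} (hψ : Function.Surjective ψ) {a : ι → S} {i : ι} (ha : a i = 0) :
    ∃ b : ι → R, ψ ∘ b = a ∧ b i = 0 := by
  classical
  obtain ⟨b, rfl⟩ := hψ.comp_left a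
  refine ⟨Function.update b i 0, ?_, by simp⟩
  rw [Function.comp_update, map_zero, ← ha, Function.update_eq_self]

variable [DecidableEq ι]

/-- `w` is obtained from `v` by a matrix of determinant one which lifts along `ψ`. -/
def LiftableOrbit (ψ : R →+* S) (v w : ι → S) : Prop :=
  ∃ M : Matrix ι ι R, M.det = 1 ∧ M.map ψ *ᵥ v = w

namespace LiftableOrbit

variable {ψ : R →+* S}

theorem refl (v : ι → S) : LiftableOrbit ψ v v := ⟨1, by simp, by simp⟩

theorem symm {v w : ι → S} : LiftableOrbit ψ v w → LiftableOrbit ψ w v := by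
  rintro ⟨M, hM, rfl⟩
  refine ⟨M.adjugate, by rw [Matrix.det_adjugate, hM, one_pow], ?_⟩
  rw [Matrix.mulVec_mulVec, ← Matrix.map_mul, Matrix.adjugate_mul, hM]
  simp

theorem trans {v w x : ι → S} : LiftableOrbit ψ v w → LiftableOrbit ψ w x →
    LiftableOrbit ψ v x := by
  rintro ⟨M, hM, rfl⟩ ⟨N, hN, rfl⟩
  exact ⟨N * M, by simp [hM, hN], by rw [Matrix.map_mul, Matrix.mulVec_mulVec]⟩

theorem isUnimodular {v w : ι → S} (h : LiftableOrbit ψ v w) (hv : IsUnimodular v) :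
    IsUnimodular w := by
  obtain ⟨M, -, rfl⟩ := h.symm
  exact hv.of_mulVec

theorem map {R' S' : Type*} [CommRing R'] [CommRing S'] {ψ' : R' →+* S'} {v w : ι → S}
    (h : LiftableOrbit ψ v w) (ρ : R →+* R') (σ : S →+* S')
    (hcomm : ψ'.comp ρ = σ.comp ψ) : LiftableOrbit ψ' (σ ∘ v) (σ ∘ w) := by
  obtain ⟨M, hM, rfl⟩ := h
  refine ⟨M.map ρ, (RingHom.map_det ρ M).symm.trans (by rw [hM, map_one]), ?_⟩
  have hmap : (M.map ρ).map ψ' = (M.map ψ).map σ := by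
    ext a b
    exact RingHom.congr_fun hcomm (M a b)
  rw [hmap]
  ext a
  exact (RingHom.map_mulVec σ (M.map ψ) v a).symm

theorem transvection (v : ι → S) {a b : ι → R} (hab : a ⬝ᵥ b = 0) :
    LiftableOrbit ψ v (v + ((ψ ∘ a) ⬝ᵥ v) • (ψ ∘ b)) := by
  refine ⟨1 + Matrix.vecMulVec b a, ?_, ?_⟩
  · rw [Matrix.vecMulVec_eq Unit, Matrix.det_one_add_replicateCol_mul_replicateRow, hab, add_zero]
  · have hmap : (1 + Matrix.vecMulVec b a).map ψ = 1 + Matrix.vecMulVec (ψ ∘ b) (ψ ∘ a) := by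
      ext i j
      simp [Matrix.vecMulVec_apply, Matrix.one_apply, apply_ite ψ]
    rw [hmap, Matrix.add_mulVec, Matrix.one_mulVec, Matrix.vecMulVec_mulVec, op_smul_eq_smul]

theorem update_add (hψ : Function.Surjective ψ) (v : ι → S) {i : ι} {a : ι → S} (ha : a i = 0) :
    LiftableOrbit ψ v (Function.update v i (v i + a ⬝ᵥ v)) := by
  obtain ⟨b, rfl, hb⟩ := exists_comp_eq_and_apply_eq_zero hψ ha
  convert transvection (ψ := ψ) v (a := b) (b := Pi.single i 1) (by simp [hb]) using 1
  ext j
  by_cases h : j = i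
  · subst h; simp
  · simp [h]

theorem add_smul (hψ : Function.Surjective ψ) (v : ι → S) {i : ι} {a : ι → S} (ha : a i = 0) :
    LiftableOrbit ψ v (v + v i • a) := by
  obtain ⟨b, rfl, hb⟩ := exists_comp_eq_and_apply_eq_zero hψ ha
  convert transvection (ψ := ψ) v (a := Pi.single i 1) (b := b) (by simp [hb]) using 3
  have hsingle : ψ ∘ Pi.single i (1 : R) = Pi.single i 1 := by
    ext j
    simp [Pi.single_apply, apply_ite ψ]
  simp [hsingle]

theorem single_of_apply_ne_zero {k : Type*} [Field k] {ψ : R →+* k} (hψ : Function.Surjective ψ)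
    {i j : ι} (hj : j ≠ i) {v : ι → k} (hvj : v j ≠ 0) :
    LiftableOrbit ψ v (Pi.single i 1) := by
  have hone : v i + Pi.single j ((1 - v i) / v j) ⬝ᵥ v = 1 := by
    simp [div_mul_cancel₀ _ hvj]
  have h1 := update_add hψ v (i := i) (a := Pi.single j ((1 - v i) / v j)) (by simp [hj.symm])
  rw [hone] at h1
  refine h1.trans ?_
  convert add_smul hψ (Function.update v i 1) (i := i) (a := -Function.update v i 0) (by simp)
    using 1
  ext a
  by_cases h : a = i
  · subst h; simp
  · simp [h]

theorem single_of_field {k : Type*} [Field k] {ψ : R →+* k} (hψ : Function.Surjective ψ)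
    {i₀ i₁ : ι} (h01 : i₀ ≠ i₁) {v : ι → k} (hv : v ≠ 0) :
    LiftableOrbit ψ v (Pi.single i₀ 1) := by
  by_cases h : ∃ j ≠ i₀, v j ≠ 0
  · obtain ⟨j, hj, hvj⟩ := h
    exact single_of_apply_ne_zero hψ hj hvj
  · push Not at h
    have h0 : v i₀ ≠ 0 := by
      refine fun h0 => hv (funext fun j => ?_)
      by_cases hj : j = i₀
      · rw [hj, h0]; rfl
      · exact h j hj
    refine (add_smul hψ v (i := i₀) (a := Pi.single i₁ 1) (by simp [h01])).trans
      (single_of_apply_ne_zero hψ h01.symm ?_)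
    simp [h i₁ h01.symm, h0]

end LiftableOrbit

/-! ### Suslin's argument: values at congruent arguments -/

-- The matrix is `1 + U W`, where `W f = (c, 0)` and the first column of `U` is `α`. The second
-- column of `U` is chosen so that the Weinstein–Aronszajn determinant `det (1 + W U)` is `1`.
theorem exists_det_eq_one_mulVec_eq_add_smul [IsDomain R] {i₀ i₁ : ι} (h01 : i₀ ≠ i₁) {c : R}
    (hc : c ≠ 0) (f α : ι → R) (g₀ g₁ β₀ β₁ : R) (h : g₀ * f i₀ + g₁ * f i₁ = c)
    (h' : (g₀ + c * β₀) * (f i₀ + c * α i₀) + (g₁ + c * β₁) * (f i₁ + c * α i₁) = c) :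
    ∃ M : Matrix ι ι R, M.det = 1 ∧ M *ᵥ f = f + c • α := by
  let W : Matrix (Fin 2) ι R := ![g₀ • Pi.single i₀ 1 + g₁ • Pi.single i₁ 1,
    f i₁ • Pi.single i₀ 1 - f i₀ • Pi.single i₁ 1]
  let U : Matrix ι (Fin 2) R :=
    Matrix.transpose ![α, β₁ • Pi.single i₀ 1 - β₀ • Pi.single i₁ 1]
  have hW (u : ι → R) : W *ᵥ u = ![g₀ * u i₀ + g₁ * u i₁, f i₁ * u i₀ - f i₀ * u i₁] := by
    ext k
    fin_cases k
    · change (g₀ • Pi.single i₀ 1 + g₁ • Pi.single i₁ 1) ⬝ᵥ u = _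
      simp [add_dotProduct]
    · change (f i₁ • Pi.single i₀ 1 - f i₀ • Pi.single i₁ 1) ⬝ᵥ u = _
      simp [sub_dotProduct]
  have hWU : W * U = !![g₀ * α i₀ + g₁ * α i₁, g₀ * β₁ - g₁ * β₀;
      f i₁ * α i₀ - f i₀ * α i₁, f i₁ * β₁ + f i₀ * β₀] := by
    ext a b
    change (W *ᵥ fun i => U i b) a = _
    rw [hW]
    fin_cases a <;> fin_cases b <;> simp [U, Matrix.transpose, h01, h01.symm, sub_eq_add_neg]
  have hcancel : g₀ * α i₀ + g₁ * α i₁ + f i₀ * β₀ + f i₁ * β₁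
      + c * (α i₀ * β₀ + α i₁ * β₁) = 0 := by
    apply mul_left_cancel₀ hc
    linear_combination h' - h
  refine ⟨1 + U * W, ?_, ?_⟩
  · rw [Matrix.det_one_add_mul_comm, hWU, Matrix.det_fin_two]
    simp only [Matrix.add_apply, Matrix.one_apply_eq, Matrix.of_apply, Matrix.cons_val',
      Matrix.cons_val_zero, Matrix.cons_val_one, Matrix.cons_val_fin_one, ne_eq, zero_ne_one,
      one_ne_zero, not_false_eq_true, Matrix.one_apply_ne, zero_add]
    linear_combination hcancel + (α i₀ * β₀ + α i₁ * β₁) * h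
  · rw [Matrix.add_mulVec, Matrix.one_mulVec, ← Matrix.mulVec_mulVec, hW, h]
    congr 1
    ext i
    simp [Matrix.mulVec, dotProduct, U, Matrix.transpose, mul_comm]

theorem exists_comp_add_mul (f b d : R[X]) (c : R) :
    ∃ a : R[X], f.comp (b + C c * d) = f.comp b + C c * a := by
  obtain ⟨e, he⟩ := sub_dvd_eval_sub (b + C c * d) b (f.map C)
  rw [eval_map, eval_map, add_sub_cancel_left] at he
  exact ⟨d * e, by rw [comp, comp, ← mul_assoc, ← he]; ring⟩

theorem exists_det_eq_one_mulVec_comp [IsDomain R] {i₀ i₁ : ι} (h01 : i₀ ≠ i₁) {c : R}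
    (hc : c ≠ 0) {f : ι → R[X]} {g₀ g₁ : R[X]} (h : g₀ * f i₀ + g₁ * f i₁ = C c) (b d : R[X]) :
    ∃ M : Matrix ι ι R[X], M.det = 1 ∧
      M *ᵥ (fun i => (f i).comp b) = fun i => (f i).comp (b + C c * d) := by
  choose α hα using fun i => exists_comp_add_mul (f i) b d c
  obtain ⟨β₀, h₀⟩ := exists_comp_add_mul g₀ b d c
  obtain ⟨β₁, h₁⟩ := exists_comp_add_mul g₁ b d c
  obtain ⟨M, hM, hMf⟩ := exists_det_eq_one_mulVec_eq_add_smul h01 (C_ne_zero.2 hc)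
    (fun i => (f i).comp b) α (g₀.comp b) (g₁.comp b) β₀ β₁
    (by simpa using congrArg (fun q => q.comp b) h)
    (by simpa [← hα, ← h₀, ← h₁] using congrArg (fun q => q.comp (b + C c * d)) h)
  refine ⟨M, hM, hMf.trans ?_⟩
  ext1 i
  simp [hα]

theorem exists_mul_add_mul_eq_C_of_isCoprime_map {k : Type*} [Field k] (q : R →+* k) {f g : R[X]}
    (hlead : q f.leadingCoeff ≠ 0) (hfg : IsCoprime (f.map q) (g.map q)) :
    ∃ (a b : R[X]) (c : R), a * f + b * g = C c ∧ q c ≠ 0 := by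
  obtain ⟨a, b, -, -, hab⟩ := exists_mul_add_mul_eq_C_resultant (m := f.natDegree)
    (n := g.natDegree + 1) f g le_rfl (Nat.le_succ _) (Or.inr (Nat.succ_ne_zero _))
  refine ⟨a, b, _, by rw [← hab]; ring, ?_⟩
  obtain ⟨e, he⟩ := Nat.exists_eq_add_of_le
    ((natDegree_map_le (f := q) (p := g)).trans g.natDegree.le_succ : _ ≤ g.natDegree + 1)
  rw [← resultant_map_map, ← natDegree_map_of_leadingCoeff_ne_zero q hlead, he,
    resultant_add_right_deg _ _ _ _ _ le_rfl, natDegree_map_of_leadingCoeff_ne_zero q hlead,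
    coeff_map, coeff_natDegree, ← natDegree_map_of_leadingCoeff_ne_zero q hlead]
  exact mul_ne_zero (pow_ne_zero _ hlead) (resultant_ne_zero _ _ hfg)

theorem exists_isCoprime_add_mul {D : Type*} [CommRing D] [IsDomain D] [IsPrincipalIdealRing D]
    {a b c x y : D} (ha : a ≠ 0) (h : x * a + y * b + c = 1) :
    ∃ z, IsCoprime a (b + z * c) := by
  classical
  -- by primes `q ∣ a`: `z` is divisible by `q` exactly when `b` is not
  let z := ((UniqueFactorizationMonoid.factors a).filter fun q => ¬ q ∣ b).prod
  refine ⟨z, isCoprime_of_prime_dvd (fun h0 => ha h0.1) fun q hq hqa hqb => ?_⟩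
  by_cases hb : q ∣ b
  · have hqz : ¬ q ∣ z := by
      intro hqz
      obtain ⟨q', hq', hqq'⟩ := hq.exists_mem_multiset_dvd hqz
      rw [Multiset.mem_filter] at hq'
      have hass : Associated q q' := hq.irreducible.associated_of_dvd
        (UniqueFactorizationMonoid.irreducible_of_factor _ hq'.1) hqq'
      exact hq'.2 (hass.symm.dvd.trans hb)
    have hc : q ∣ c := (hq.dvd_or_dvd ((dvd_add_right hb).1 hqb)).resolve_left hqz
    exact hq.not_dvd_one (h ▸ dvd_add (dvd_add (hqa.mul_left _) (hb.mul_left _)) hc)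
  · obtain ⟨q', hq', hqq'⟩ := UniqueFactorizationMonoid.exists_mem_factors_of_dvd ha
      hq.irreducible hqa
    have hqz : q ∣ z := hqq'.dvd.trans (Multiset.dvd_prod
      (Multiset.mem_filter.2 ⟨hq', fun h' => hb (hqq'.dvd.trans h')⟩))
    exact hb ((dvd_add_left (hqz.mul_right c)).1 hqb)

namespace LiftableOrbit

variable {ψ : R →+* S}

theorem exists_isCoprime_map {k : Type*} [Field k] {q : S →+* k} (hψ : Function.Surjective ψ)
    (hq : Function.Surjective q) {i₀ i₁ : ι} (h01 : i₀ ≠ i₁) {v : ι → S[X]}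
    (hv : IsUnimodular v) (h0 : (v i₀).map q ≠ 0) :
    ∃ w, LiftableOrbit (mapRingHom ψ) v w ∧ w i₀ = v i₀ ∧
      IsCoprime ((w i₀).map q) ((w i₁).map q) := by
  obtain ⟨x, hx⟩ := hv
  let x' : ι → S[X] := x - Pi.single i₀ (x i₀) - Pi.single i₁ (x i₁)
  have hx' : x i₀ * v i₀ + x i₁ * v i₁ + x' ⬝ᵥ v = 1 := by
    simp only [x', sub_dotProduct, single_dotProduct, hx]
    ring
  obtain ⟨z, hz⟩ := exists_isCoprime_add_mul (b := (v i₁).map q) (c := (x' ⬝ᵥ v).map q)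
    (x := (x i₀).map q) (y := (x i₁).map q) h0 (by
      simpa only [Polynomial.map_add, Polynomial.map_mul, Polynomial.map_one]
        using congr(($hx').map q))
  obtain ⟨z, rfl⟩ := map_surjective q hq z
  refine ⟨Function.update v i₁ (v i₁ + (z • x') ⬝ᵥ v),
    update_add (map_surjective ψ hψ) v (by simp [x', h01.symm]), by simp [h01], ?_⟩
  simpa [h01] using hz

theorem comp_right (hψ : Function.Surjective ψ) {v w : ι → S[X]}
    (h : LiftableOrbit (mapRingHom ψ) v w) (b : S[X]) :
    LiftableOrbit (mapRingHom ψ) (fun i => (v i).comp b) (fun i => (w i).comp b) := by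
  obtain ⟨b, rfl⟩ := map_surjective ψ hψ b
  refine h.map (compRingHom b) (compRingHom (b.map ψ)) ?_
  ext x <;> simp

theorem comp_add_mul [IsDomain R] (hψ : Function.Surjective ψ) {i₀ i₁ : ι} (h01 : i₀ ≠ i₁)
    {c : R} (hc : c ≠ 0) {f : ι → R[X]} {g₀ g₁ : R[X]} (h : g₀ * f i₀ + g₁ * f i₁ = C c)
    (b d : S[X]) : LiftableOrbit (mapRingHom ψ) (fun i => ((f i).map ψ).comp b)
      (fun i => ((f i).map ψ).comp (b + C (ψ c) * d)) := by
  obtain ⟨b, rfl⟩ := map_surjective ψ hψ b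
  obtain ⟨d, rfl⟩ := map_surjective ψ hψ d
  obtain ⟨M, hM, hMf⟩ := exists_det_eq_one_mulVec_comp h01 hc h b d
  refine ⟨M, hM, funext fun i => ?_⟩
  have hi := congr(mapRingHom ψ ($hMf i))
  rw [RingHom.map_mulVec] at hi
  simpa [Function.comp_def, Polynomial.map_comp] using hi

theorem exists_notMem_comp [IsDomain R] (hψ : Function.Surjective ψ) {i₀ i₁ : ι} (h01 : i₀ ≠ i₁)
    {v : ι → S[X]} (hv : IsUnimodular v) (hlead : IsUnit (v i₀).leadingCoeff)
    (m : Ideal S) [m.IsMaximal] :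
    ∃ c ∉ m, ∀ b d : S[X], LiftableOrbit (mapRingHom ψ) (fun i => (v i).comp b)
      (fun i => (v i).comp (b + C c * d)) := by
  let _ : Field (S ⧸ m) := Ideal.Quotient.field m
  let q : S →+* S ⧸ m := Ideal.Quotient.mk m
  have hqlead : q (v i₀).leadingCoeff ≠ 0 := (hlead.map q).ne_zero
  obtain ⟨w, hvw, hw0, hcop⟩ := exists_isCoprime_map (q := q) hψ Ideal.Quotient.mk_surjective h01
    hv fun h0 => hqlead (by simpa using congr(($h0).coeff (v i₀).natDegree))
  choose f hf hfdeg using fun i => exists_natDegree_eq_of_mem_lifts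
    (mem_lifts_of_surjective (f := ψ) hψ (w i))
  have hflead : (q.comp ψ) (f i₀).leadingCoeff ≠ 0 := by
    rwa [leadingCoeff, hfdeg, RingHom.comp_apply, ← coeff_map, hf, hw0]
  obtain ⟨g₀, g₁, c, hg, hqc⟩ := exists_mul_add_mul_eq_C_of_isCoprime_map (q.comp ψ) hflead
    (g := f i₁) (by rwa [← Polynomial.map_map, ← Polynomial.map_map, hf, hf])
  have hc0 : c ≠ 0 := fun h => hqc (by rw [h, map_zero])
  refine ⟨ψ c, fun hmem => hqc (Ideal.Quotient.eq_zero_iff_mem.2 hmem), fun b d => ?_⟩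
  have hw := comp_add_mul hψ h01 hc0 hg b d
  simp only [hf] at hw
  exact ((hvw.comp_right hψ b).trans hw).trans (hvw.comp_right hψ _).symm

-- The scalars `c` such that evaluation is constant modulo `c` up to liftable orbits form an ideal,
-- which lies in no maximal ideal.
theorem eval_zero [IsDomain R] (hψ : Function.Surjective ψ) {i₀ i₁ : ι} (h01 : i₀ ≠ i₁)
    {v : ι → S[X]} (hv : IsUnimodular v) (hlead : IsUnit (v i₀).leadingCoeff) :
    LiftableOrbit (mapRingHom ψ) v (fun i => C ((v i).eval 0)) := by
  let J : Ideal S :=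
    { carrier := {c | ∀ b d : S[X], LiftableOrbit (mapRingHom ψ) (fun i => (v i).comp b)
        (fun i => (v i).comp (b + C c * d))}
      zero_mem' := fun b d => by simpa using refl _
      add_mem' := fun {c c'} hc hc' b d => by
        refine (hc b d).trans ?_
        simpa [add_mul, add_assoc] using hc' (b + C c * d) d
      smul_mem' := fun s c hc b d => by
        have hsd := hc b (C s * d)
        rwa [← mul_assoc, ← C_mul, mul_comm c s] at hsd }
  have hJ : (1 : S) ∈ J := by
    rw [← Ideal.eq_top_iff_one]
    by_contra hne
    obtain ⟨m, hm, hJm⟩ := Ideal.exists_le_maximal J hne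
    obtain ⟨c, hcm, hc⟩ := exists_notMem_comp hψ h01 hv hlead m
    exact hcm (hJm hc)
  simpa using hJ X (-X)

end LiftableOrbit

end UnimodularVectors

/-! ### Unimodular vectors over polynomial rings over a field -/

section Shear

open MvPolynomial

variable {R : Type*} [CommRing R] {n : ℕ}

/-- The substitution `X i ↦ X i + c * X 0 ^ N ^ i` for `i ≠ 0`, fixing `X 0`, which for `c = 1` and
large `N` makes any given polynomial over a field monic in `X 0` up to a unit. -/
noncomputable def shear (N : ℕ) (c : R) :
    MvPolynomial (Fin (n + 1)) R →ₐ[R] MvPolynomial (Fin (n + 1)) R :=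
  aeval fun i => if i = 0 then X 0 else X i + C c * X 0 ^ N ^ (i : ℕ)

theorem shear_X_zero (N : ℕ) (c : R) : shear (n := n) N c (X 0) = X 0 := by simp [shear]

theorem shear_X_succ (N : ℕ) (c : R) (i : Fin n) :
    shear N c (X i.succ) = X i.succ + C c * X 0 ^ N ^ ((i : ℕ) + 1) := by
  simp [shear]

theorem shear_comp_shear_neg (N : ℕ) (c : R) :
    (shear (n := n) N c).comp (shear N (-c)) = AlgHom.id R _ := by
  ext i : 1
  cases i using Fin.cases <;> simp [shear_X_zero, shear_X_succ]

/-- The shear by `X 0 ^ N ^ i` followed by viewing a polynomial as one in `X 0`. -/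
noncomputable def shearFinSuccEquiv (R : Type*) [CommRing R] (n N : ℕ) :
    MvPolynomial (Fin (n + 1)) R ≃+* Polynomial (MvPolynomial (Fin n) R) :=
  ((AlgEquiv.ofAlgHom (shear N 1) (shear N (-1)) (shear_comp_shear_neg N 1)
    (by simpa using shear_comp_shear_neg N (-1 : R))).trans (finSuccEquiv R n)).toRingEquiv

theorem shearFinSuccEquiv_X_zero (N : ℕ) : shearFinSuccEquiv R n N (X 0) = Polynomial.X := by
  simp [shearFinSuccEquiv, shear_X_zero, finSuccEquiv_X_zero]

theorem shearFinSuccEquiv_X_succ (N : ℕ) (i : Fin n) :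
    shearFinSuccEquiv R n N (X i.succ) =
      Polynomial.X ^ N ^ ((i : ℕ) + 1) + Polynomial.C (X i) := by
  simp [shearFinSuccEquiv, shear_X_succ, finSuccEquiv_X_zero, finSuccEquiv_X_succ, add_comm]

theorem shearFinSuccEquiv_C (N : ℕ) (a : R) :
    shearFinSuccEquiv R n N (C a) = Polynomial.C (C a) := by
  simp [shearFinSuccEquiv, finSuccEquiv_apply]

theorem shearFinSuccEquiv_map {S : Type*} [CommRing S] (φ : R →+* S) (N : ℕ)
    (f : MvPolynomial (Fin (n + 1)) R) :
    shearFinSuccEquiv S n N (map φ f) = (shearFinSuccEquiv R n N f).map (map φ) := by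
  induction f using MvPolynomial.induction_on with
  | C a => simp [shearFinSuccEquiv_C]
  | add p q hp hq => simp [hp, hq]
  | mul_X p i hp =>
    rw [map_mul, map_mul, map_mul, Polynomial.map_mul, hp]
    cases i using Fin.cases <;> simp [shearFinSuccEquiv_X_zero, shearFinSuccEquiv_X_succ]

theorem shearFinSuccEquiv_monomial (N : ℕ) (v : Fin (n + 1) →₀ ℕ) (a : R) :
    shearFinSuccEquiv R n N (monomial v a) =
      Polynomial.C (C a) * ∏ i, shearFinSuccEquiv R n N (X i) ^ v i := by
  rw [monomial_eq, Finsupp.prod_pow v fun i => X i, map_mul, shearFinSuccEquiv_C, map_prod]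
  simp only [map_pow]

theorem natDegree_shearFinSuccEquiv_X [Nontrivial R] (N : ℕ) (i : Fin (n + 1)) :
    (shearFinSuccEquiv R n N (X i)).natDegree = N ^ (i : ℕ) := by
  cases i using Fin.cases with
  | zero => simp [shearFinSuccEquiv_X_zero]
  | succ i => rw [shearFinSuccEquiv_X_succ, Polynomial.natDegree_X_pow_add_C, Fin.val_succ]

theorem monic_shearFinSuccEquiv_X {N : ℕ} (hN : 0 < N) (i : Fin (n + 1)) :
    (shearFinSuccEquiv R n N (X i)).Monic := by
  cases i using Fin.cases with
  | zero => simpa only [shearFinSuccEquiv_X_zero] using Polynomial.monic_X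
  | succ i =>
    rw [shearFinSuccEquiv_X_succ]
    exact Polynomial.monic_X_pow_add_C _ (by positivity)

theorem leadingCoeff_shearFinSuccEquiv_monomial {N : ℕ} (hN : 0 < N) (v : Fin (n + 1) →₀ ℕ)
    (a : R) : (shearFinSuccEquiv R n N (monomial v a)).leadingCoeff = C a := by
  rw [shearFinSuccEquiv_monomial, Polynomial.leadingCoeff_mul_monic
    (Polynomial.monic_prod_of_monic _ _ fun i _ => (monic_shearFinSuccEquiv_X hN i).pow _),
    Polynomial.leadingCoeff_C]

theorem natDegree_shearFinSuccEquiv_monomial [IsDomain R] {N : ℕ} (hN : 0 < N)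
    (v : Fin (n + 1) →₀ ℕ) {a : R} (ha : a ≠ 0) :
    (shearFinSuccEquiv R n N (monomial v a)).natDegree = ∑ i : Fin (n + 1), N ^ (i : ℕ) * v i := by
  rw [shearFinSuccEquiv_monomial, Polynomial.natDegree_C_mul (by simpa using ha),
    Polynomial.natDegree_prod _ _ fun i _ =>
      pow_ne_zero _ (monic_shearFinSuccEquiv_X hN i).ne_zero]
  simp [Polynomial.natDegree_pow, natDegree_shearFinSuccEquiv_X, mul_comm]

theorem eq_of_sum_pow_mul_eq {n N : ℕ} {v w : Fin (n + 1) →₀ ℕ} (hN : 1 < N) (hv : ∀ i, v i < N)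
    (hw : ∀ i, w i < N)
    (h : ∑ i : Fin (n + 1), N ^ (i : ℕ) * v i = ∑ i : Fin (n + 1), N ^ (i : ℕ) * w i) : v = w := by
  refine Finsupp.ext <| congrFun <| List.ofFn_inj.mp ?_
  apply Nat.ofDigits_inj_of_len_eq hN (by simp) (by grind) (by grind)
  simpa only [Nat.ofDigits_eq_sum_mapIdx, List.mapIdx_eq_ofFn, List.get_ofFn, List.length_ofFn,
    Fin.val_cast, mul_comm, List.sum_ofFn] using! h

-- The monomials of `f` acquire pairwise distinct degrees, read off from base `N` digits.
theorem exists_isUnit_leadingCoeff_shearFinSuccEquiv {k : Type*} [Field k]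
    {f : MvPolynomial (Fin (n + 1)) k} (hf : f ≠ 0) :
    ∃ N, IsUnit (shearFinSuccEquiv k n N f).leadingCoeff := by
  set N := 2 + f.totalDegree
  let g (v : Fin (n + 1) →₀ ℕ) : Polynomial (MvPolynomial (Fin n) k) :=
    shearFinSuccEquiv k n N (monomial v (coeff v f))
  have hdeg {v} (hv : v ∈ f.support) : (g v).natDegree = ∑ i : Fin (n + 1), N ^ (i : ℕ) * v i :=
    natDegree_shearFinSuccEquiv_monomial (by lia) v (mem_support_iff.1 hv)
  have hlead (v) : (g v).leadingCoeff = C (coeff v f) :=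
    leadingCoeff_shearFinSuccEquiv_monomial (by lia) v _
  have hlt {v} (hv : v ∈ f.support) (i) : v i < N :=
    ((monomial_le_degreeOf i hv).trans (degreeOf_le_totalDegree f i)).trans_lt (by lia)
  obtain ⟨v, hv, hmax⟩ := Finset.exists_max_image f.support (fun v => (g v).natDegree)
    (support_nonempty.mpr hf)
  have hsum : shearFinSuccEquiv k n N f = (∑ w ∈ f.support \ {v}, g w) + g v := by
    conv_lhs => rw [← f.support_sum_monomial_coeff]
    rw [map_sum, add_comm (∑ w ∈ _, g w)]
    exact Finset.sum_eq_add_sum_sdiff_singleton_of_mem hv g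
  refine ⟨N, ?_⟩
  rw [hsum, Polynomial.leadingCoeff_add_of_degree_lt, hlead]
  · exact (mem_support_iff.mp hv).isUnit.map C
  have hgv : g v ≠ 0 := by
    rw [← Polynomial.leadingCoeff_ne_zero, hlead]
    simpa using hv
  refine (Polynomial.degree_sum_le _ _).trans_lt
    ((Finset.sup_lt_iff (Polynomial.degree_ne_bot.2 hgv).bot_lt).mpr fun w hw => ?_)
  obtain ⟨hw, hwv⟩ := Finset.mem_sdiff.mp hw
  refine Polynomial.degree_lt_degree (lt_of_le_of_ne (hmax w hw) fun h => hwv ?_)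
  rw [hdeg hw, hdeg hv] at h
  exact Finset.mem_singleton.2 (eq_of_sum_pow_mul_eq (by lia) (hlt hw) (hlt hv) h)

end Shear

section PolynomialRing

open MvPolynomial

namespace LiftableOrbit

variable {ι : Type*} [Fintype ι] [DecidableEq ι]

theorem map_single {R R' S S' : Type*} [CommRing R] [CommRing R'] [CommRing S] [CommRing S']
    {ψ : R →+* S} {ψ' : R' →+* S'} {v : ι → S} {i : ι} (h : LiftableOrbit ψ v (Pi.single i 1))
    (ρ : R →+* R') (σ : S →+* S') (hcomm : ψ'.comp ρ = σ.comp ψ) :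
    LiftableOrbit ψ' (σ ∘ v) (Pi.single i 1) := by
  have hsingle : σ ∘ Pi.single i 1 = Pi.single i 1 := by
    ext j
    simp [Pi.single_apply, apply_ite σ]
  exact hsingle ▸ h.map ρ σ hcomm

theorem single_of_ringEquiv {R R' S S' : Type*} [CommRing R] [CommRing R'] [CommRing S]
    [CommRing S'] {ψ : R →+* S} {ψ' : R' →+* S'} (e : R ≃+* R') (e' : S ≃+* S')
    (he : ∀ x, ψ' (e x) = e' (ψ x)) {v : ι → S} {i : ι}
    (h : LiftableOrbit ψ' (e' ∘ v) (Pi.single i 1)) : LiftableOrbit ψ v (Pi.single i 1) := by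
  have hcomm : ψ.comp (e.symm : R' →+* R) = (e'.symm : S' →+* S).comp ψ' := by
    ext x
    obtain ⟨y, rfl⟩ := e.surjective x
    simp [he]
  simpa [Function.comp_def] using h.map_single (e.symm : R' →+* R) (e'.symm : S' →+* S) hcomm

variable {O k : Type*} [CommRing O] [Field k] {φ : O →+* k} {i₀ i₁ : ι}

theorem single_of_mvPolynomial_fin_zero (hφ : Function.Surjective φ) (h01 : i₀ ≠ i₁)
    {v : ι → MvPolynomial (Fin 0) k} (hv : IsUnimodular v) :
    LiftableOrbit (MvPolynomial.map φ) v (Pi.single i₀ 1) := by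
  refine single_of_ringEquiv (ψ' := φ) (isEmptyRingEquiv O (Fin 0)) (isEmptyRingEquiv k (Fin 0))
    (fun x => by rw [isEmptyRingEquiv_eq_coeff_zero, isEmptyRingEquiv_eq_coeff_zero, coeff_map])
    (single_of_field hφ h01 (hv.map (isEmptyRingEquiv k (Fin 0)).toRingHom).ne_zero)

theorem single_of_mvPolynomial_of_apply_ne_zero [IsDomain O] {n : ℕ} (hφ : Function.Surjective φ)
    (h01 : i₀ ≠ i₁) {v : ι → MvPolynomial (Fin (n + 1)) k} (hv : IsUnimodular v) (h0 : v i₀ ≠ 0)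
    (ih : ∀ w : ι → MvPolynomial (Fin n) k, IsUnimodular w →
      LiftableOrbit (MvPolynomial.map φ) w (Pi.single i₀ 1)) :
    LiftableOrbit (MvPolynomial.map φ) v (Pi.single i₀ 1) := by
  obtain ⟨N, hN⟩ := exists_isUnit_leadingCoeff_shearFinSuccEquiv h0
  have hev : IsUnimodular (shearFinSuccEquiv k n N ∘ v) :=
    hv.map (shearFinSuccEquiv k n N).toRingHom
  have heval := eval_zero (MvPolynomial.map_surjective φ hφ) h01 hev hN
  have hsingle := (ih _ (hev.map (Polynomial.evalRingHom 0))).map_single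
    (ψ' := Polynomial.mapRingHom (MvPolynomial.map φ)) Polynomial.C Polynomial.C
    (RingHom.ext fun x => by simp)
  exact single_of_ringEquiv (shearFinSuccEquiv O n N) (shearFinSuccEquiv k n N)
    (fun x => (shearFinSuccEquiv_map φ N x).symm) (heval.trans hsingle)

theorem single_of_mvPolynomial [IsDomain O] (hφ : Function.Surjective φ) (h01 : i₀ ≠ i₁) {n : ℕ}
    {v : ι → MvPolynomial (Fin n) k} (hv : IsUnimodular v) :
    LiftableOrbit (MvPolynomial.map φ) v (Pi.single i₀ 1) := by
  induction n with
  | zero => exact single_of_mvPolynomial_fin_zero hφ h01 hv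
  | succ n ih =>
    by_cases h0 : v i₀ = 0
    · obtain ⟨j, hj⟩ : ∃ j, v j ≠ 0 := Function.ne_iff.1 hv.ne_zero
      have hji : i₀ ≠ j := by rintro rfl; exact hj h0
      have h1 := update_add (map_surjective φ hφ) v (i := i₀) (a := Pi.single j 1) (by simp [hji])
      exact h1.trans (single_of_mvPolynomial_of_apply_ne_zero hφ h01 (h1.isUnimodular hv)
        (by simpa [h0] using hj) fun _ => ih)
    · exact single_of_mvPolynomial_of_apply_ne_zero hφ h01 hv h0 fun _ => ih

end LiftableOrbit

end PolynomialRing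

/-! ### Projective modules over polynomial rings over a field -/

section ProjectivesAreFree

open scoped Matrix

/-- Every unimodular vector can be completed to an invertible matrix. -/
def IsHermiteRing (R : Type*) [CommRing R] : Prop :=
  ∀ (l : ℕ) (w : Fin (l + 1) → R), IsUnimodular w →
    ∃ W : Matrix (Fin (l + 1)) (Fin (l + 1)) R, IsUnit W.det ∧ W *ᵥ w = Pi.single 0 1

/-- Finitely generated projective modules are free. -/
def ProjectivesAreFree (R : Type u) [CommRing R] : Prop :=
  ∀ (M : Type u) [AddCommGroup M] [Module R M] [Module.Finite R M] [Module.Projective R M],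
    Module.Free R M

/-- Finitely generated modules have finite free resolutions. -/
def HasFiniteFreeResolutions (R : Type u) [CommRing R] : Prop :=
  ∀ (M : Type u) [AddCommGroup M] [Module R M] [Module.Finite R M],
    ∃ n, HasFiniteFreeResolution R n M

theorem IsUnimodular.of_linearMap {R : Type*} [CommRing R] {ι : Type*} [Fintype ι] {v : ι → R}
    (f : (ι → R) →ₗ[R] R) (hf : f v = 1) : IsUnimodular v := by
  classical
  refine ⟨fun i => f (Pi.single i 1), ?_⟩
  have hv : v = ∑ i, v i • Pi.single i 1 := by
    ext j
    simp [Finset.sum_apply, Pi.single_apply]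
  conv_rhs => rw [← hf, hv, map_sum]
  simp [dotProduct, mul_comm]

theorem nonempty_linearEquiv_of_prod_self_linearEquiv {R M N : Type*} [CommRing R]
    [AddCommGroup M] [Module R M] [AddCommGroup N] [Module R N] (e : (M × R) ≃ₗ[R] (R × N))
    (he : e (0, 1) = (1, 0)) : Nonempty (M ≃ₗ[R] N) := by
  have he' : e.symm (1, 0) = (0, 1) := by rw [← he, e.symm_apply_apply]
  have hfst (x : M × R) : (e (x.1, 0)).2 = (e x).2 := by
    have hx : (x.1, (0 : R)) = x - x.2 • (0, 1) := by ext <;> simp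
    rw [hx, map_sub, map_smul, he]
    simp
  have hsnd (y : R × N) : (e.symm (0, y.2)).1 = (e.symm y).1 := by
    have hy : ((0 : R), y.2) = y - y.1 • (1, 0) := by ext <;> simp
    rw [hy, map_sub, map_smul, he']
    simp
  refine ⟨LinearEquiv.ofLinearMap
    (LinearMap.snd R R N ∘ₗ e.toLinearMap ∘ₗ LinearMap.inl R M R)
    (LinearMap.fst R M R ∘ₗ e.symm.toLinearMap ∘ₗ LinearMap.inr R R N) ?_ ?_⟩
  · ext n
    simp [hfst]
  · ext m
    simp [hsnd]

namespace IsHermiteRing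

variable {R : Type*} [CommRing R]

theorem of_ringEquiv {S : Type*} [CommRing S] (h : IsHermiteRing R) (e : R ≃+* S) :
    IsHermiteRing S := by
  intro l w hw
  obtain ⟨W, hW, hWw⟩ := h l (e.symm ∘ w) (hw.map e.symm.toRingHom)
  refine ⟨W.map e, ?_, ?_⟩
  · exact RingHom.map_det e.toRingHom W ▸ hW.map e.toRingHom
  · ext1 i
    have hi := (RingHom.map_mulVec e.toRingHom W (e.symm ∘ w) i).symm.trans
      (congrArg e (congrFun hWw i))
    simpa [Function.comp_def, Pi.single_apply, apply_ite e] using hi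

theorem free_of_free_prod_self (h : IsHermiteRing R) {M : Type*} [AddCommGroup M] [Module R M]
    [Module.Finite R M] [Module.Free R (M × R)] : Module.Free R M := by
  obtain _ | _ := subsingleton_or_nontrivial R
  · exact Module.Free.of_subsingleton' R M
  obtain ⟨l, ⟨e₀⟩⟩ : ∃ l, Nonempty ((M × R) ≃ₗ[R] (Fin l → R)) :=
    ⟨_, ⟨(Module.finBasis R (M × R)).equivFun⟩⟩
  obtain _ | l := l
  · have hzero : (0, 1) = (0 : M × R) := e₀.injective (Subsingleton.elim _ _)
    exact absurd (congrArg Prod.snd hzero) one_ne_zero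
  have hw : IsUnimodular (e₀ (0, 1)) :=
    .of_linearMap (LinearMap.snd R M R ∘ₗ e₀.symm.toLinearMap) (by simp)
  obtain ⟨W, hW, hWw⟩ := h l _ hw
  let e : (M × R) ≃ₗ[R] R × (Fin l → R) :=
    e₀ ≪≫ₗ Matrix.toLinearEquiv' W (W.invertibleOfIsUnitDet hW) ≪≫ₗ
      (Fin.consLinearEquiv R fun _ => R).symm
  have he : e (0, 1) = (1, 0) := by
    refine ((Fin.consLinearEquiv R fun _ => R).symm_apply_eq).2 (hWw.trans ?_)
    ext i
    cases i using Fin.cases <;> simp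
  obtain ⟨f⟩ := nonempty_linearEquiv_of_prod_self_linearEquiv e he
  exact Module.Free.of_equiv f.symm

theorem free_of_free_prod_fin (h : IsHermiteRing R) {M : Type*} [AddCommGroup M] [Module R M]
    [Module.Finite R M] (a : ℕ) (hM : Module.Free R (M × (Fin a → R))) : Module.Free R M := by
  induction a with
  | zero => exact Module.Free.of_equiv (LinearEquiv.prodUnique : (M × (Fin 0 → R)) ≃ₗ[R] M)
  | succ a ih =>
    let e : (M × (Fin (a + 1) → R)) ≃ₗ[R] ((M × (Fin a → R)) × R) :=
      ((LinearEquiv.refl R M).prodCongr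
        ((Fin.consLinearEquiv R (fun _ => R)).symm.trans (LinearEquiv.prodComm R _ _))).trans
        (LinearEquiv.prodAssoc R _ _ _).symm
    have := Module.Free.of_equiv e
    exact ih h.free_of_free_prod_self

theorem free_of_isStablyFree (h : IsHermiteRing R) (M : Type*) [AddCommGroup M] [Module R M]
    [Module.Finite R M] [Module.IsStablyFree R M] : Module.Free R M := by
  obtain _ | _ := subsingleton_or_nontrivial R
  · exact Module.Free.of_subsingleton' R M
  obtain ⟨N, _, _, _, _, _⟩ := Module.IsStablyFree.exist_free_prod R M
  exact h.free_of_free_prod_fin _ (Module.Free.of_equiv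
    ((LinearEquiv.refl R M).prodCongr (Module.finBasis R N).equivFun))

end IsHermiteRing

theorem ProjectivesAreFree.of_ringEquiv {R S : Type u} [CommRing R] [CommRing S]
    (h : ProjectivesAreFree R) (e : R ≃+* S) : ProjectivesAreFree S := by
  intro M _ _ _ _
  let _ : Module R M := Module.compHom M e.toRingHom
  let _ := RingHomInvPair.of_ringEquiv e
  let _ := RingHomInvPair.of_ringEquiv e.symm
  let ε : M ≃ₛₗ[(e : R →+* S)] M :=
    { AddEquiv.refl M with map_smul' := fun _ _ => rfl }
  have : Module.Projective R M := Module.Projective.of_equiv ε.symm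
  have : Module.Finite R M := Module.Finite.of_surjective ε.symm.toLinearMap ε.symm.surjective
  have := h M
  exact Module.Free.of_equiv ε

theorem isHermiteRing_mvPolynomial (k : Type*) [Field k] (n : ℕ) :
    IsHermiteRing (MvPolynomial (Fin n) k) := by
  intro l w hw
  obtain _ | l := l
  · obtain ⟨c, hc⟩ := hw
    replace hc : c 0 * w 0 = 1 := (Fin.sum_univ_one _).symm.trans hc
    refine ⟨Matrix.diagonal c, ?_, ?_⟩
    · rw [Matrix.det_diagonal, Fin.prod_univ_one]
      exact IsUnit.of_mul_eq_one _ hc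
    · ext1 i
      rw [Fin.fin_one_eq_zero i, Matrix.mulVec_diagonal, hc, Pi.single_eq_same]
  · obtain ⟨W, hW, hWw⟩ := LiftableOrbit.single_of_mvPolynomial (φ := RingHom.id k)
      Function.surjective_id (zero_ne_one (α := Fin (l + 2))) hw
    refine ⟨W, by simp [hW], ?_⟩
    rw [← hWw]
    congr 1
    ext1 i j
    simp [MvPolynomial.map_id]

-- The base ring is replaced by an isomorphic iterated univariate polynomial ring in order to stay
-- in a single universe and to apply Hilbert's syzygy theorem one variable at a time.
theorem exists_ringEquiv_hasFiniteFreeResolutions (k : Type u) [Field k] (n : ℕ) :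
    ∃ (T : Type u) (_ : CommRing T), IsNoetherianRing T ∧ HasFiniteFreeResolutions T ∧
      Nonempty (T ≃+* MvPolynomial (Fin n) k) := by
  induction n with
  | zero =>
    exact ⟨k, inferInstance, inferInstance, fun M _ _ _ => ⟨0, inferInstance, inferInstance⟩,
      ⟨(MvPolynomial.isEmptyRingEquiv k (Fin 0)).symm⟩⟩
  | succ n ih =>
    obtain ⟨T, _, _, hT, ⟨e⟩⟩ := ih
    refine ⟨Polynomial T, inferInstance, inferInstance,
      fun M _ _ _ => exists_hasFiniteFreeResolution_polynomial hT M, ⟨?_⟩⟩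
    exact (Polynomial.mapEquiv e).trans (MvPolynomial.finSuccEquiv k n).symm.toRingEquiv

/-- The Quillen–Suslin theorem. -/
theorem projectivesAreFree_mvPolynomial (k : Type u) [Field k] (n : ℕ) :
    ProjectivesAreFree (MvPolynomial (Fin n) k) := by
  obtain ⟨T, _, _, hT, ⟨e⟩⟩ := exists_ringEquiv_hasFiniteFreeResolutions k n
  have hH : IsHermiteRing T := (isHermiteRing_mvPolynomial k n).of_ringEquiv e.symm
  refine ProjectivesAreFree.of_ringEquiv (fun M _ _ _ _ => ?_) e
  obtain ⟨d, hd⟩ := hT M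
  have := hd.isStablyFree
  exact hH.free_of_isStablyFree M

end ProjectivesAreFree

/-! ### Ideals of minors -/

section MinorIdeal

open Matrix

variable {R : Type*} [CommRing R] {m n k : Type*}

/-- The ideal generated by the `i × i` minors; arbitrary rather than increasing families of rows
and columns are allowed, which only adds zeros and sign changes. -/
def minorIdeal (i : ℕ) (F : Matrix m n R) : Ideal R :=
  Ideal.span {a | ∃ (f : Fin i → m) (g : Fin i → n), a = (F.submatrix f g).det}

theorem det_submatrix_mem_minorIdeal {i : ℕ} (F : Matrix m n R) (f : Fin i → m) (g : Fin i → n) :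
    (F.submatrix f g).det ∈ minorIdeal i F :=
  Ideal.subset_span ⟨f, g, rfl⟩

theorem minorIdeal_le_iff {i : ℕ} {F : Matrix m n R} {J : Ideal R} :
    minorIdeal i F ≤ J ↔ ∀ (f : Fin i → m) (g : Fin i → n), (F.submatrix f g).det ∈ J := by
  rw [minorIdeal, Ideal.span_le]
  exact ⟨fun h f g => h ⟨f, g, rfl⟩, by rintro h _ ⟨f, g, rfl⟩; exact h f g⟩

theorem minorIdeal_transpose (i : ℕ) (F : Matrix m n R) : minorIdeal i Fᵀ = minorIdeal i F := by
  apply le_antisymm <;> rw [minorIdeal_le_iff] <;> intro f g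
  · rw [← transpose_submatrix, det_transpose]
    exact det_submatrix_mem_minorIdeal F g f
  · rw [← det_transpose, transpose_submatrix]
    exact det_submatrix_mem_minorIdeal Fᵀ g f

theorem minorIdeal_mul_le_right [Fintype k] (i : ℕ) (U : Matrix m k R) (G : Matrix k n R) :
    minorIdeal i (U * G) ≤ minorIdeal i G := by
  classical
  rw [minorIdeal_le_iff]
  intro f g
  have hrows : (U * G).submatrix f g = fun a => ∑ x, U (f a) x • fun b => G x (g b) := by
    ext a b
    simp [Matrix.mul_apply, Finset.sum_apply]
  rw [hrows]
  change (detRowAlternating : AlternatingMap R (Fin i → R) R (Fin i)).toMultilinearMap _ ∈ _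
  rw [MultilinearMap.map_sum]
  refine Ideal.sum_mem _ fun κ _ => ?_
  rw [MultilinearMap.map_smul_univ]
  exact Ideal.mul_mem_left _ _ (det_submatrix_mem_minorIdeal G κ g)

theorem minorIdeal_mul_le_left [Fintype k] (i : ℕ) (F : Matrix m k R) (V : Matrix k n R) :
    minorIdeal i (F * V) ≤ minorIdeal i F := by
  rw [← minorIdeal_transpose, transpose_mul, ← minorIdeal_transpose i F]
  exact minorIdeal_mul_le_right _ _ _

theorem minorIdeal_succ_le (i : ℕ) (F : Matrix m n R) :
    minorIdeal (i + 1) F ≤ minorIdeal i F := by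
  rw [minorIdeal_le_iff]
  intro f g
  rw [det_succ_row_zero]
  exact Ideal.sum_mem _ fun j _ => Ideal.mul_mem_left _ _
    (det_submatrix_mem_minorIdeal F (f ∘ Fin.succ) (g ∘ j.succAbove))

theorem minorIdeal_map {S : Type*} [CommRing S] (φ : R →+* S) (i : ℕ) (F : Matrix m n R) :
    minorIdeal i (F.map φ) = (minorIdeal i F).map φ := by
  have hdet (f : Fin i → m) (g : Fin i → n) :
      ((F.map φ).submatrix f g).det = φ (F.submatrix f g).det :=
    (RingHom.map_det φ _).symm
  apply le_antisymm
  · rw [minorIdeal_le_iff]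
    intro f g
    rw [hdet]
    exact Ideal.mem_map_of_mem _ (det_submatrix_mem_minorIdeal F f g)
  · rw [Ideal.map_le_iff_le_comap, minorIdeal_le_iff]
    intro f g
    rw [Ideal.mem_comap, ← hdet]
    exact det_submatrix_mem_minorIdeal _ f g

theorem minorIdeal_smul (c : R) (i : ℕ) (F : Matrix m n R) :
    minorIdeal i (c • F) = Ideal.span {c ^ i} * minorIdeal i F := by
  have hdet (f : Fin i → m) (g : Fin i → n) :
      ((c • F).submatrix f g).det = c ^ i * (F.submatrix f g).det := by
    rw [submatrix_smul, Pi.smul_apply, Pi.smul_apply, det_smul, Fintype.card_fin]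
  apply le_antisymm
  · rw [minorIdeal_le_iff]
    intro f g
    rw [hdet]
    exact Ideal.mul_mem_mul (Ideal.mem_span_singleton_self _) (det_submatrix_mem_minorIdeal F f g)
  · rw [minorIdeal, Ideal.span_mul_span', Ideal.span_le]
    rintro _ ⟨_, rfl, _, ⟨f, g, rfl⟩, rfl⟩
    exact Ideal.subset_span ⟨f, g, (hdet f g).symm⟩

theorem minorIdeal_zero_left (F : Matrix m n R) : minorIdeal 0 F = ⊤ := by
  rw [Ideal.eq_top_iff_one]
  exact Ideal.subset_span ⟨Fin.elim0, Fin.elim0, by simp⟩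

theorem minorIdeal_eq_top_of_le {i j : ℕ} (hij : i ≤ j) {F : Matrix m n R}
    (h : minorIdeal j F = ⊤) : minorIdeal i F = ⊤ :=
  top_le_iff.1 <| h ▸ antitone_nat_of_succ_le (f := fun i => minorIdeal i F)
    (fun i => minorIdeal_succ_le i F) hij

theorem mem_minorIdeal_one (F : Matrix m n R) (a : m) (b : n) : F a b ∈ minorIdeal 1 F :=
  Ideal.subset_span ⟨fun _ => a, fun _ => b, by simp⟩

theorem minorIdeal_one_le_iff {F : Matrix m n R} {J : Ideal R} :
    minorIdeal 1 F ≤ J ↔ ∀ a b, F a b ∈ J := by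
  refine ⟨fun h a b => h (mem_minorIdeal_one F a b), fun h => minorIdeal_le_iff.2 fun f g => ?_⟩
  simpa using h (f 0) (g 0)

theorem exists_strictMono_comp_perm {i l : ℕ} {f : Fin i → Fin l} (hf : Function.Injective f) :
    ∃ (f' : Fin i → Fin l) (σ : Equiv.Perm (Fin i)), StrictMono f' ∧ f = f' ∘ σ := by
  refine ⟨f ∘ Tuple.sort f, (Tuple.sort f)⁻¹,
    (Tuple.monotone_sort f).strictMono_of_injective (hf.comp (Equiv.injective _)), ?_⟩
  ext1 x
  simp

theorem minorIdeal_eq_span_minorsSet {l m : ℕ} (i : ℕ) (F : Matrix (Fin l) (Fin m) R) :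
    minorIdeal i F = Ideal.span (minorsSet i F) := by
  apply le_antisymm
  · rw [minorIdeal_le_iff]
    intro f g
    by_cases hf : Function.Injective f
    · by_cases hg : Function.Injective g
      · obtain ⟨f', σ, hf', rfl⟩ := exists_strictMono_comp_perm hf
        obtain ⟨g', τ, hg', rfl⟩ := exists_strictMono_comp_perm hg
        have hperm : F.submatrix (f' ∘ σ) (g' ∘ τ) =
            ((F.submatrix f' g').submatrix σ id).submatrix id τ := rfl
        rw [hperm, det_permute', det_permute]
        exact Ideal.mul_mem_left _ _ (Ideal.mul_mem_left _ _
          (Ideal.subset_span ⟨f', g', hf', hg', rfl⟩))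
      · obtain ⟨a, b, hab, hne⟩ := Function.not_injective_iff.1 hg
        rw [det_zero_of_column_eq hne (fun c => by simp [hab])]
        exact zero_mem _
    · obtain ⟨a, b, hab, hne⟩ := Function.not_injective_iff.1 hf
      rw [det_zero_of_row_eq hne (by ext c; simp [hab])]
      exact zero_mem _
  · rw [Ideal.span_le]
    rintro _ ⟨f, g, -, -, rfl⟩
    exact det_submatrix_mem_minorIdeal F f g

theorem minorIdeal_rank_succ [IsDomain R] [Fintype n] (F : Matrix m n R) :
    minorIdeal (F.rank + 1) F = ⊥ := by
  classical
  rw [eq_bot_iff, minorIdeal_le_iff]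
  intro f g
  rw [Ideal.mem_bot]
  by_contra hdet
  have hcol : LinearIndependent R (fun j => F.col (g j)) :=
    .of_comp (LinearMap.funLeft R R f) (linearIndependent_cols_of_det_ne_zero hdet)
  have hmem (j) : F.col (g j) ∈ LinearMap.range F.mulVecLin :=
    ⟨Pi.single (g j) 1, by simp⟩
  have hrange :
      LinearIndependent R (fun j => (⟨F.col (g j), hmem j⟩ : LinearMap.range F.mulVecLin)) :=
    .of_comp (Submodule.subtype _) hcol
  have hle := hrange.fintype_card_le_finrank
  rw [Fintype.card_fin] at hle
  exact absurd hle (by simp [Matrix.rank])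

end MinorIdeal

section MatrixFactorization

open Matrix

variable {A : Type*} [CommRing A] {m n : Type*}

-- Bordering a `k × k` minor by one row and one column gives a minor of size `k + 1`, which is zero.
theorem det_smul_eq_of_minorIdeal_succ_eq_bot [IsDomain A] {k : ℕ} {F : Matrix m n A}
    (hF : minorIdeal (k + 1) F = ⊥) {f : Fin k → m} {g : Fin k → n}
    (hΔ : (F.submatrix f g).det ≠ 0) :
    (F.submatrix f g).det • F =
      F.submatrix id g * (F.submatrix f g).adjugate * F.submatrix f id := by
  set P := F.submatrix f g
  ext a b
  let q : Matrix (Fin k) Unit A := F.submatrix f fun _ => b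
  let ρ : Matrix Unit (Fin k) A := F.submatrix (fun _ => a) g
  let x : Matrix Unit Unit A := F.submatrix (fun _ => a) fun _ => b
  have hbordered : (fromBlocks P q ρ x).det = 0 := by
    let e : Fin k ⊕ Unit ≃ Fin (k + 1) :=
      (Equiv.sumCongr (Equiv.refl _) (finOneEquiv.symm)).trans finSumFinEquiv
    have hblocks : fromBlocks P q ρ x =
        F.submatrix (Sum.elim f fun _ => a) (Sum.elim g fun _ => b) := by
      ext (i | i) (j | j) <;> rfl
    have hmem := det_submatrix_mem_minorIdeal F ((Sum.elim f fun _ => a) ∘ e.symm)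
      ((Sum.elim g fun _ => b) ∘ e.symm)
    rwa [hF, Ideal.mem_bot, ← submatrix_submatrix, det_submatrix_equiv_self, ← hblocks] at hmem
  have hmul : fromBlocks P.adjugate 0 (-(ρ * P.adjugate)) (P.det • 1) * fromBlocks P q ρ x =
      fromBlocks (P.det • 1) (P.adjugate * q) 0 (P.det • x - ρ * P.adjugate * q) := by
    rw [fromBlocks_multiply]
    congr 1
    · simp [adjugate_mul]
    · simp
    · rw [Matrix.neg_mul, Matrix.mul_assoc, adjugate_mul]
      simp
    · rw [Matrix.neg_mul, smul_mul, Matrix.one_mul, neg_add_eq_sub]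
  have hdet := congrArg det hmul
  rw [det_mul, hbordered, mul_zero, det_fromBlocks_zero₂₁, det_smul, det_one, mul_one] at hdet
  have hschur := (mul_eq_zero.1 hdet.symm).resolve_left (pow_ne_zero _ hΔ)
  rw [det_unique, Matrix.sub_apply, sub_eq_zero] at hschur
  exact hschur

theorem mul_adjugate_submatrix_apply {k : ℕ} (F : Matrix m n A) (f : Fin k → m)
    (g : Fin k → n) (a : m) (j : Fin k) :
    (F.submatrix id g * (F.submatrix f g).adjugate) a j =
      (F.submatrix (Function.update f j a) g).det := by
  have hcramer : (F.submatrix id g * (F.submatrix f g).adjugate) a j =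
      ((F.submatrix f g)ᵀ.adjugate *ᵥ fun x => F a (g x)) j := by
    rw [← adjugate_transpose]
    simp [Matrix.mul_apply, mulVec, dotProduct, mul_comm]
  rw [hcramer, ← cramer_eq_adjugate_mulVec, cramer_transpose_apply]
  congr 1
  ext x y
  by_cases h : x = j
  · subst h; simp
  · simp [h]

theorem mul_one_submatrix_id [Fintype m] [DecidableEq m] {k l : Type*} (F : Matrix l m A)
    (g : k → m) : F * (1 : Matrix m m A).submatrix id g = F.submatrix id g := by
  rw [← F.submatrix_id_id, ← submatrix_mul _ _ id id g Function.bijective_id, Matrix.mul_one]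
  rfl

theorem one_submatrix_id_mul [Fintype m] [DecidableEq m] {k l : Type*} (F : Matrix m l A)
    (f : k → m) : (1 : Matrix m m A).submatrix f id * F = F.submatrix f id := by
  rw [← F.submatrix_id_id, ← submatrix_mul _ _ f id id Function.bijective_id, Matrix.one_mul]
  rfl

theorem exists_smul_mul_eq_det_smul [IsDomain A] [Fintype m] [Fintype n] {k : ℕ} {d : A}
    {F : Matrix m n A} (hk : minorIdeal k F ≤ Ideal.span {d}) (hk' : minorIdeal (k + 1) F = ⊥)
    {f : Fin k → m} {g : Fin k → n} (hΔ : (F.submatrix f g).det ≠ 0) :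
    ∃ (E : Matrix m m A) (X : Matrix n m A),
      d • E = F * X ∧ d • (E * F) = (F.submatrix f g).det • F := by
  classical
  have hdvd (a : m) (j : Fin k) :
      d ∣ (F.submatrix id g * (F.submatrix f g).adjugate) a j := by
    rw [mul_adjugate_submatrix_apply, ← Ideal.mem_span_singleton]
    exact hk (det_submatrix_mem_minorIdeal _ _ _)
  choose H hH using hdvd
  have hH' : F.submatrix id g * (F.submatrix f g).adjugate = d • Matrix.of H := by
    ext a j
    simp [hH]
  refine ⟨Matrix.of H * (1 : Matrix m m A).submatrix f id,
    (1 : Matrix n n A).submatrix id g * (F.submatrix f g).adjugate *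
      (1 : Matrix m m A).submatrix f id, ?_, ?_⟩
  · rw [← Matrix.smul_mul, ← hH', ← Matrix.mul_assoc, ← Matrix.mul_assoc, mul_one_submatrix_id]
  · rw [Matrix.mul_assoc, ← Matrix.smul_mul, ← hH', one_submatrix_id_mul,
      det_smul_eq_of_minorIdeal_succ_eq_bot hk' hΔ]

-- The scalars `a` with `d • E = F * X` and `d • (E * F) = a • F` for some `E`, `X` form an ideal
-- which contains the `k × k` minors, hence `d`.
theorem exists_smul_eq_mul_and_mul_eq_self [IsDomain A] [Fintype m] [Fintype n] {k : ℕ} {d : A}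
    (hd : d ≠ 0) {F : Matrix m n A} (hk : minorIdeal k F = Ideal.span {d})
    (hk' : minorIdeal (k + 1) F = ⊥) :
    ∃ (E : Matrix m m A) (X : Matrix n m A), d • E = F * X ∧ E * F = F := by
  let J : Ideal A :=
    { carrier := {a | ∃ (E : Matrix m m A) (X : Matrix n m A),
        d • E = F * X ∧ d • (E * F) = a • F}
      zero_mem' := ⟨0, 0, by simp, by simp⟩
      add_mem' := by
        rintro a b ⟨E, X, h1, h2⟩ ⟨E', X', h1', h2'⟩
        exact ⟨E + E', X + X', by rw [smul_add, h1, h1', Matrix.mul_add],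
          by rw [Matrix.add_mul, smul_add, h2, h2', add_smul]⟩
      smul_mem' := by
        rintro c a ⟨E, X, h1, h2⟩
        exact ⟨c • E, c • X, by rw [smul_comm, h1, Matrix.mul_smul],
          by rw [Matrix.smul_mul, smul_comm, h2, smul_assoc]⟩ }
  have hJ : minorIdeal k F ≤ J := by
    rw [minorIdeal_le_iff]
    intro f g
    by_cases hΔ : (F.submatrix f g).det = 0
    · rw [hΔ]; exact zero_mem _
    · exact exists_smul_mul_eq_det_smul hk.le hk' hΔ
  obtain ⟨E, X, hX, hE⟩ : d ∈ J := hJ (hk ▸ Ideal.mem_span_singleton_self d)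
  exact ⟨E, X, hX, smul_right_injective _ hd hE⟩

end MatrixFactorization

/-! ### Unimodular combinations of columns -/

section SplitMono

open Matrix

variable {A : Type u} [CommRing A] {l m : ℕ}

theorem exists_mul_eq_and_mul_eq_one_of_isIdempotentElem [Nontrivial A]
    (hA : ProjectivesAreFree A) {E : Matrix (Fin l) (Fin l) A} (hE : IsIdempotentElem E) :
    ∃ (ρ : ℕ) (N : Matrix (Fin l) (Fin ρ) A) (L : Matrix (Fin ρ) (Fin l) A),
      N * L = E ∧ L * N = 1 := by
  let Q := LinearMap.range E.mulVecLin
  have hsplit : E.mulVecLin.rangeRestrict ∘ₗ Q.subtype = LinearMap.id := by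
    ext1 ⟨_, y, rfl⟩
    exact Subtype.ext (by simp [hE.eq])
  have := Module.Projective.of_split Q.subtype E.mulVecLin.rangeRestrict hsplit
  have := hA Q
  let β := Module.finBasis A Q
  let i := Q.subtype ∘ₗ β.equivFun.symm.toLinearMap
  let q := β.equivFun.toLinearMap ∘ₗ E.mulVecLin.rangeRestrict
  have hiq : i ∘ₗ q = E.toLin' := LinearMap.ext fun x => by simp [i, q]
  have hqi : q ∘ₗ i = LinearMap.id := LinearMap.ext fun x => by
    have hx := LinearMap.congr_fun hsplit (β.equivFun.symm x)
    rw [LinearMap.comp_apply] at hx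
    simp only [i, q, LinearMap.comp_apply, LinearEquiv.coe_coe, hx, LinearMap.id_apply,
      LinearEquiv.apply_symm_apply]
  refine ⟨_, LinearMap.toMatrix' i, LinearMap.toMatrix' q, ?_, ?_⟩
  · rw [← LinearMap.toMatrix'_comp, hiq, LinearMap.toMatrix'_toLin']
  · rw [← LinearMap.toMatrix'_comp, hqi, LinearMap.toMatrix'_id]

theorem exists_eq_mul_of_minorIdeal_eq_span [IsDomain A] (hA : ProjectivesAreFree A) {d : A}
    (hd : d ≠ 0) {r : ℕ} {F : Matrix (Fin l) (Fin m) A}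
    (hr : minorIdeal r F = Ideal.span {d}) (hr' : minorIdeal (r + 1) F = ⊥) :
    ∃ (ρ : ℕ) (N : Matrix (Fin l) (Fin ρ) A) (M : Matrix (Fin ρ) (Fin m) A)
      (L : Matrix (Fin ρ) (Fin l) A) (X : Matrix (Fin m) (Fin ρ) A),
      F = N * M ∧ L * N = 1 ∧ M * X = d • 1 := by
  obtain ⟨E, X, hX, hEF⟩ := exists_smul_eq_mul_and_mul_eq_self hd hr hr'
  have hE : IsIdempotentElem E := smul_right_injective _ hd <| by
    simp only
    rw [← Matrix.mul_smul, hX, ← Matrix.mul_assoc, hEF]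
  obtain ⟨ρ, N, L, rfl, hLN⟩ := exists_mul_eq_and_mul_eq_one_of_isIdempotentElem hA hE
  refine ⟨ρ, N, L * F, L, X * N, by rw [← Matrix.mul_assoc, hEF], hLN, ?_⟩
  calc L * F * (X * N) = L * (F * X) * N := by simp only [Matrix.mul_assoc]
    _ = d • ((L * N) * (L * N)) := by
      rw [← hX, Matrix.mul_smul, Matrix.smul_mul]
      simp only [Matrix.mul_assoc]
    _ = d • 1 := by rw [hLN, Matrix.mul_one]

end SplitMono

section UnimodularCombination

open Matrix

theorem minorIdeal_zero_right {R m n : Type*} [CommRing R] {k : ℕ} (hk : 0 < k) :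
    minorIdeal k (0 : Matrix m n R) = ⊥ := by
  obtain ⟨k, rfl⟩ := Nat.exists_eq_succ_of_ne_zero hk.ne'
  rw [eq_bot_iff, minorIdeal_le_iff]
  intro f g
  rw [det_eq_zero_of_row_eq_zero 0 fun j => rfl]
  exact zero_mem _

theorem exists_isUnimodular_mulVec_of_minorIdeal_eq_top {B : Type u} [CommRing B] [IsDomain B]
    (hB : ProjectivesAreFree B) {l m k : ℕ} {F : Matrix (Fin l) (Fin m) B} (hk : 0 < k)
    (h : minorIdeal k F = ⊤) (h' : minorIdeal (k + 1) F = ⊥) :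
    ∃ v, IsUnimodular (F *ᵥ v) := by
  obtain ⟨ρ, N, M, L, X, rfl, hLN, hMX⟩ :=
    exists_eq_mul_of_minorIdeal_eq_span hB one_ne_zero (h.trans Ideal.span_singleton_one.symm) h'
  rw [one_smul] at hMX
  obtain _ | ρ := ρ
  · have hzero : N * M = 0 := by ext; simp [Matrix.mul_apply]
    rw [hzero, minorIdeal_zero_right hk] at h
    exact absurd h bot_ne_top
  · refine ⟨X *ᵥ Pi.single 0 1, .of_mulVec (M := L) ?_⟩
    rw [mulVec_mulVec, mulVec_mulVec, ← Matrix.mul_assoc, hLN, Matrix.one_mul, hMX, one_mulVec]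
    exact ⟨Pi.single 0 1, by simp⟩

variable {A : Type u} {B : Type v} [CommRing A] [CommRing B] {p : A} {π : A →+* B}

/-- Every unimodular vector of length at least two over the target is moved to the first unit
vector by a matrix of determinant one that lifts to the source. -/
def LiftsUnimodularVectors (π : A →+* B) : Prop :=
  ∀ ⦃ρ : ℕ⦄ (v : Fin (ρ + 2) → B), IsUnimodular v → LiftableOrbit π v (Pi.single 0 1)

-- After a matrix of determinant one, the first entry of `ω` is congruent to `1` modulo `p`, hence
-- coprime to `p ^ t`, so the second entry may be changed to one that is `1` modulo the first.
theorem LiftableOrbit.exists_isUnimodular_add_smul (hker : RingHom.ker π = Ideal.span {p}) {ρ : ℕ}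
    {ω : Fin (ρ + 2) → A} (hω : LiftableOrbit π (π ∘ ω) (Pi.single 0 1)) (t : ℕ) :
    ∃ q : Fin (ρ + 2) → A, IsUnimodular (ω + p ^ t • q) := by
  obtain ⟨M, hM, hMω⟩ := hω
  set ζ := M *ᵥ ω with hζ
  obtain ⟨x, y, hxy⟩ : IsCoprime (ζ 0) (p ^ t) := by
    have hmem : ζ 0 - 1 ∈ RingHom.ker π := by
      rw [RingHom.mem_ker, map_sub, map_one, hζ, RingHom.map_mulVec, hMω]
      simp
    obtain ⟨c, hc⟩ := Ideal.mem_span_singleton.1 (hker ▸ hmem)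
    exact IsCoprime.pow_right ⟨1, -c, by linear_combination hc⟩
  let z : Fin (ρ + 2) → A := Pi.single 1 (y * (1 - ζ 1))
  have hmul : M *ᵥ (ω + p ^ t • (M.adjugate *ᵥ z)) = ζ + p ^ t • z := by
    rw [mulVec_add, mulVec_smul, mulVec_mulVec, mul_adjugate, hM, one_smul, one_mulVec]
  refine ⟨M.adjugate *ᵥ z, .of_mulVec (M := M) ?_⟩
  rw [hmul]
  refine ⟨Pi.single 1 1 + Pi.single 0 (x * (1 - ζ 1)), ?_⟩
  simp only [dotProduct_add, add_dotProduct, single_dotProduct, one_mul, dotProduct_smul,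
    dotProduct_single, Pi.add_apply, Pi.single_eq_same, ne_eq, one_ne_zero, not_false_eq_true,
    Pi.single_eq_of_ne, add_zero, smul_eq_mul, z]
  linear_combination (1 - ζ 1) * hxy

variable {l m r t k : ℕ}

theorem exists_isUnimodular_mulVec [IsDomain A] [IsDomain B] (hp : p ≠ 0)
    (hπ : Function.Surjective π) (hker : RingHom.ker π = Ideal.span {p})
    (hlift : LiftsUnimodularVectors π) (hA : ProjectivesAreFree A) (hB : ProjectivesAreFree B)
    {F : Matrix (Fin l) (Fin m) A} (hr : minorIdeal r F = Ideal.span {p ^ t})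
    (hr' : minorIdeal (r + 1) F = ⊥) (hk : 0 < k) (h : minorIdeal k F = ⊤)
    (h' : minorIdeal (k + 1) F ≤ Ideal.span {p}) : ∃ v, IsUnimodular (F *ᵥ v) := by
  have htop : minorIdeal k (F.map π) = ⊤ := by rw [minorIdeal_map, h, Ideal.map_top]
  have hbot : minorIdeal (k + 1) (F.map π) = ⊥ := by
    rw [minorIdeal_map, eq_bot_iff, Ideal.map_le_iff_le_comap]
    exact h'.trans hker.ge
  obtain ⟨w, hw⟩ := exists_isUnimodular_mulVec_of_minorIdeal_eq_top hB hk htop hbot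
  obtain ⟨v, rfl⟩ := hπ.comp_left w
  obtain ⟨ρ, N, M, L, X, rfl, hLN, hMX⟩ :=
    exists_eq_mul_of_minorIdeal_eq_span hA (pow_ne_zero t hp) hr hr'
  have hN {x} (hx : IsUnimodular (M *ᵥ x)) : IsUnimodular ((N * M) *ᵥ x) :=
    .of_mulVec (M := L) (by rwa [mulVec_mulVec, ← Matrix.mul_assoc, hLN, Matrix.one_mul])
  have hω : IsUnimodular (π ∘ (M *ᵥ v)) := by
    have hNM : (N * M).map π *ᵥ (π ∘ v) = N.map π *ᵥ (π ∘ (M *ᵥ v)) := by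
      ext i
      rw [← RingHom.map_mulVec, ← RingHom.map_mulVec, mulVec_mulVec]
    exact .of_mulVec (hNM ▸ hw)
  obtain _ | _ | ρ := ρ
  · exact absurd (Subsingleton.elim _ _) hω.ne_zero
  · have hrow : IsUnimodular (M 0) := by
      rw [isUnimodular_iff_span_range_eq_top, eq_top_iff, ← minorIdeal_eq_top_of_le hk h]
      refine (minorIdeal_mul_le_right 1 N M).trans (minorIdeal_one_le_iff.2 fun a b => ?_)
      exact Ideal.subset_span ⟨b, by rw [Fin.fin_one_eq_zero a]⟩
    obtain ⟨c, hc⟩ := hrow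
    exact ⟨c, hN ⟨1, by simpa [mulVec, dotProduct, mul_comm] using hc⟩⟩
  · obtain ⟨q, hq⟩ := (hlift _ hω).exists_isUnimodular_add_smul hker t
    refine ⟨v + X *ᵥ q, hN ?_⟩
    rwa [mulVec_add, mulVec_mulVec, hMX, smul_mulVec, one_mulVec]

end UnimodularCombination

/-! ### Equivalence of matrices -/

namespace MatrixEquiv

variable {R : Type*} [CommRing R] {l m : ℕ} {F G H : Matrix (Fin l) (Fin m) R}

theorem refl (F : Matrix (Fin l) (Fin m) R) : MatrixEquiv F F := ⟨1, 1, by simp, by simp, by simp⟩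

theorem trans (h : MatrixEquiv F G) (h' : MatrixEquiv G H) : MatrixEquiv F H := by
  obtain ⟨U, V, hU, hV, rfl⟩ := h
  obtain ⟨U', V', hU', hV', rfl⟩ := h'
  refine ⟨U * U', V' * V, ?_, ?_, by simp only [Matrix.mul_assoc]⟩
  · rw [Matrix.det_mul]; exact hU.mul hU'
  · rw [Matrix.det_mul]; exact hV'.mul hV

theorem symm (h : MatrixEquiv F G) : MatrixEquiv G F := by
  obtain ⟨U, V, hU, hV, rfl⟩ := h
  refine ⟨U⁻¹, V⁻¹, Matrix.isUnit_nonsing_inv_det _ hU, Matrix.isUnit_nonsing_inv_det _ hV, ?_⟩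
  rw [← Matrix.mul_assoc, Matrix.mul_nonsing_inv_cancel_right _ _ hV,
    Matrix.nonsing_inv_mul_cancel_left _ _ hU]

theorem smul (h : MatrixEquiv F G) (c : R) : MatrixEquiv (c • F) (c • G) := by
  obtain ⟨U, V, hU, hV, rfl⟩ := h
  exact ⟨U, V, hU, hV, by rw [Matrix.mul_smul, Matrix.smul_mul]⟩

theorem minorIdeal_le (h : MatrixEquiv F G) (i : ℕ) : minorIdeal i F ≤ minorIdeal i G := by
  obtain ⟨U, V, -, -, rfl⟩ := h
  exact (minorIdeal_mul_le_left i _ V).trans (minorIdeal_mul_le_right i U G)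

theorem minorIdeal_eq (h : MatrixEquiv F G) (i : ℕ) : minorIdeal i F = minorIdeal i G :=
  le_antisymm (h.minorIdeal_le i) (h.symm.minorIdeal_le i)

end MatrixEquiv

section UnitCorner

open Matrix

variable {R : Type*} [CommRing R] {k l m : ℕ}

/-- The block diagonal matrix `1 ⊕ F`. -/
def unitCorner (F : Matrix (Fin l) (Fin m) R) : Matrix (Fin (l + 1)) (Fin (m + 1)) R :=
  of (Fin.cons (Fin.cons 1 0) fun i => Fin.cons 0 (F i))

variable (F : Matrix (Fin l) (Fin m) R)

@[simp] theorem unitCorner_zero_zero : unitCorner F 0 0 = 1 := rfl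

@[simp] theorem unitCorner_zero_succ (j : Fin m) : unitCorner F 0 j.succ = 0 := rfl

@[simp] theorem unitCorner_succ_zero (i : Fin l) : unitCorner F i.succ 0 = 0 := rfl

@[simp] theorem unitCorner_succ_succ (i : Fin l) (j : Fin m) :
    unitCorner F i.succ j.succ = F i j := rfl

theorem unitCorner_mul (G : Matrix (Fin m) (Fin k) R) :
    unitCorner F * unitCorner G = unitCorner (F * G) := by
  ext i j
  refine Fin.cases ?_ (fun i => ?_) i <;> refine Fin.cases ?_ (fun j => ?_) j <;>
    simp [mul_apply, Fin.sum_univ_succ]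

theorem det_unitCorner (F : Matrix (Fin l) (Fin l) R) : (unitCorner F).det = F.det := by
  have hsub : (unitCorner F).submatrix Fin.succ Fin.succ = F := rfl
  rw [det_succ_row_zero, Fin.sum_univ_succ]
  simp [hsub]

theorem MatrixEquiv.unitCorner_congr {F G : Matrix (Fin l) (Fin m) R} (h : MatrixEquiv F G) :
    MatrixEquiv (unitCorner F) (unitCorner G) := by
  obtain ⟨U, V, hU, hV, rfl⟩ := h
  exact ⟨unitCorner U, unitCorner V, by rwa [det_unitCorner], by rwa [det_unitCorner],
    by rw [unitCorner_mul, unitCorner_mul]⟩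

theorem exists_comp_succ_eq_succ_comp {i l : ℕ} {f : Fin (i + 1) → Fin (l + 1)}
    (hf : StrictMono f) : ∃ f' : Fin i → Fin l, f ∘ Fin.succ = Fin.succ ∘ f' := by
  have hpos (x : Fin i) : f x.succ ≠ 0 :=
    ((Fin.zero_le _).trans_lt (hf x.succ_pos)).ne'
  exact ⟨fun x => (f x.succ).pred (hpos x), funext fun x => (Fin.succ_pred _ (hpos x)).symm⟩

theorem minorIdeal_unitCorner (i : ℕ) : minorIdeal (i + 1) (unitCorner F) = minorIdeal i F := by
  apply le_antisymm
  · have hrows : (unitCorner F).submatrix Fin.succ id =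
        F * (1 : Matrix (Fin (m + 1)) (Fin (m + 1)) R).submatrix Fin.succ id := by
      ext a b
      refine Fin.cases ?_ (fun b => ?_) b <;> simp [mul_apply, one_apply]
    rw [minorIdeal_eq_span_minorsSet, Ideal.span_le]
    rintro _ ⟨f, g, hf, -, rfl⟩
    obtain ⟨f', hf'⟩ := exists_comp_succ_eq_succ_comp hf
    rw [det_succ_row_zero]
    refine Ideal.sum_mem _ fun j _ => Ideal.mul_mem_left _ _ ?_
    rw [submatrix_submatrix, hf']
    apply minorIdeal_mul_le_left i F
    rw [← hrows]
    exact det_submatrix_mem_minorIdeal ((unitCorner F).submatrix Fin.succ id) f' (g ∘ j.succAbove)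
  · rw [minorIdeal_le_iff]
    intro f g
    have hsub : (unitCorner F).submatrix (Fin.cons 0 (Fin.succ ∘ f)) (Fin.cons 0 (Fin.succ ∘ g)) =
        unitCorner (F.submatrix f g) := by
      ext a b
      refine Fin.cases ?_ (fun a => ?_) a <;> refine Fin.cases ?_ (fun b => ?_) b <;> simp
    rw [← det_unitCorner, ← hsub]
    exact det_submatrix_mem_minorIdeal _ _ _

theorem exists_det_eq_one_mul_eq_unitCorner {F : Matrix (Fin (l + 1)) (Fin (m + 1)) R}
    (hF : ∀ i, F i 0 = Pi.single (M := fun _ => R) 0 1 i) :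
    ∃ C : Matrix (Fin (m + 1)) (Fin (m + 1)) R, C.det = 1 ∧
      F * C = unitCorner (F.submatrix Fin.succ Fin.succ) := by
  let C : Matrix (Fin (m + 1)) (Fin (m + 1)) R :=
    of (Fin.cons (Fin.cons 1 fun j => -F 0 j.succ) fun i =>
      Fin.cons 0 fun j => (1 : Matrix _ _ R) i j)
  have hsub : C.submatrix Fin.succ Fin.succ = 1 := rfl
  refine ⟨C, ?_, ?_⟩
  · rw [det_succ_column_zero, Fin.sum_univ_succ, Fin.succAbove_zero, hsub]
    simp [C]
  · ext i j
    refine Fin.cases ?_ (fun i => ?_) i <;> refine Fin.cases ?_ (fun j => ?_) j <;>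
      simp [mul_apply, Fin.sum_univ_succ, C, hF, one_apply]

theorem IsHermiteRing.exists_matrixEquiv_unitCorner (hR : IsHermiteRing R)
    {F : Matrix (Fin (l + 1)) (Fin (m + 1)) R} {v : Fin (m + 1) → R} (hv : IsUnimodular (F *ᵥ v)) :
    ∃ G : Matrix (Fin l) (Fin m) R, MatrixEquiv F (unitCorner G) := by
  obtain ⟨W, hW, hWv⟩ := hR l _ hv
  obtain ⟨T, hT, hTv⟩ := hR m _ hv.of_mulVec
  have hcol : (W * F * T⁻¹) *ᵥ Pi.single 0 1 = Pi.single 0 1 := by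
    have hTv' : T⁻¹ *ᵥ Pi.single 0 1 = v := by
      rw [← hTv, mulVec_mulVec, nonsing_inv_mul _ hT, one_mulVec]
    rw [← mulVec_mulVec, hTv', ← mulVec_mulVec, hWv]
  have hcol' (i) : (W * F * T⁻¹) i 0 = Pi.single (M := fun _ => R) 0 1 i := by
    simpa using congrFun hcol i
  obtain ⟨C, hC, hFC⟩ := exists_det_eq_one_mul_eq_unitCorner hcol'
  refine ⟨(W * F * T⁻¹).submatrix Fin.succ Fin.succ, MatrixEquiv.symm ⟨W, T⁻¹ * C, hW, ?_, ?_⟩⟩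
  · rw [det_mul, hC, mul_one]
    exact isUnit_nonsing_inv_det _ hT
  · rw [← hFC, Matrix.mul_assoc]

end UnitCorner

/-! ### Smith forms with powers on the diagonal -/

section SmithForm

open Matrix

/-- The `l × m` matrix with diagonal entries `p ^ s 0, …, p ^ s (r - 1)` and zeros elsewhere. -/
def powDiagonal {R : Type*} [CommRing R] (p : R) (r : ℕ) (s : ℕ → ℕ) (l m : ℕ) :
    Matrix (Fin l) (Fin m) R :=
  of fun i j => if (i : ℕ) = j ∧ (i : ℕ) < r then p ^ s i else 0

theorem unitCorner_powDiagonal {R : Type*} [CommRing R] (p : R) (r : ℕ) {s : ℕ → ℕ} (hs : s 0 = 0)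
    (l m : ℕ) : unitCorner (powDiagonal p r (fun i => s (i + 1)) l m) =
      powDiagonal p (r + 1) s (l + 1) (m + 1) := by
  ext i j
  refine Fin.cases ?_ (fun i => ?_) i <;> refine Fin.cases ?_ (fun j => ?_) j <;>
    simp [powDiagonal, hs]

theorem smul_powDiagonal {R : Type*} [CommRing R] (p : R) (a r : ℕ) (s : ℕ → ℕ) (l m : ℕ) :
    p ^ a • powDiagonal p r s l m = powDiagonal p r (fun i => a + s i) l m := by
  ext i j
  simp [powDiagonal, pow_add]

/-- The data of the Smith form `diag(p ^ s 0, …, p ^ s (r - 1))`, read off from ideals of minors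
instead of gcds; the exponents are indexed by `ℕ`, and only the first `r` of them matter. -/
structure HasPowMinors {R : Type*} [CommRing R] {l m : ℕ} (p : R) (r : ℕ) (s : ℕ → ℕ)
    (F : Matrix (Fin l) (Fin m) R) : Prop where
  minorIdeal_eq : ∀ i ≤ r, minorIdeal i F = Ideal.span {p ^ ∑ j ∈ Finset.range i, s j}
  minorIdeal_succ_eq_bot : minorIdeal (r + 1) F = ⊥

namespace HasPowMinors

variable {R : Type*} [CommRing R] {p : R} {r : ℕ} {s : ℕ → ℕ} {l m : ℕ}

theorem of_unitCorner {G : Matrix (Fin l) (Fin m) R} (h : HasPowMinors p (r + 1) s (unitCorner G))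
    (hs : s 0 = 0) : HasPowMinors p r (fun i => s (i + 1)) G := by
  refine ⟨fun i hi => ?_, ?_⟩
  · rw [← minorIdeal_unitCorner, h.minorIdeal_eq _ (Nat.succ_le_succ hi), Finset.sum_range_succ',
      hs, add_zero]
  · rw [← minorIdeal_unitCorner, h.minorIdeal_succ_eq_bot]

theorem of_matrixEquiv {F G : Matrix (Fin l) (Fin m) R} (h : HasPowMinors p r s F)
    (hFG : MatrixEquiv F G) : HasPowMinors p r s G :=
  ⟨fun i hi => hFG.minorIdeal_eq i ▸ h.minorIdeal_eq i hi,
    hFG.minorIdeal_eq (r + 1) ▸ h.minorIdeal_succ_eq_bot⟩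

theorem matrixEquiv_zero {F : Matrix (Fin l) (Fin m) R} (h : HasPowMinors p 0 s F) :
    MatrixEquiv F (powDiagonal p 0 s l m) := by
  have hF : F = powDiagonal p 0 s l m := by
    ext i j
    simpa [powDiagonal] using minorIdeal_one_le_iff.1 h.minorIdeal_succ_eq_bot.le i j
  rw [← hF]
  exact .refl F

theorem exists_apply_ne_zero [IsDomain R] (hp : p ≠ 0) (hr : 0 < r) {F : Matrix (Fin l) (Fin m) R}
    (h : HasPowMinors p r s F) : ∃ a b, F a b ≠ 0 := by
  by_contra! hF
  have hbot : minorIdeal 1 F ≤ ⊥ := minorIdeal_one_le_iff.2 hF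
  rw [h.minorIdeal_eq 1 hr, le_bot_iff, Ideal.span_singleton_eq_bot] at hbot
  exact pow_ne_zero _ hp hbot

theorem exists_eq_pow_smul [IsDomain R] (hp : p ≠ 0) (hs : Monotone s) (hr : 0 < r)
    {F : Matrix (Fin l) (Fin m) R} (h : HasPowMinors p r s F) :
    ∃ F', F = p ^ s 0 • F' ∧ HasPowMinors p r (fun i => s i - s 0) F' := by
  have hdvd (i j) : p ^ s 0 ∣ F i j := by
    have hmem := mem_minorIdeal_one F i j
    rwa [h.minorIdeal_eq 1 hr, Finset.sum_range_one, Ideal.mem_span_singleton] at hmem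
  choose F' hF' using hdvd
  obtain rfl : F = p ^ s 0 • of F' := by
    ext i j
    exact hF' i j
  have hsum (i : ℕ) : ∑ j ∈ Finset.range i, s j =
      s 0 * i + ∑ j ∈ Finset.range i, (s j - s 0) := by
    rw [← Finset.sum_congr rfl fun j _ => Nat.add_sub_cancel' (hs (Nat.zero_le j)),
      Finset.sum_add_distrib, Finset.sum_const, Finset.card_range, smul_eq_mul, mul_comm]
  have hne (i : ℕ) : (p ^ s 0) ^ i ≠ 0 := pow_ne_zero _ (pow_ne_zero _ hp)
  refine ⟨of F', rfl, fun i hi => ?_, ?_⟩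
  · rw [← Ideal.span_singleton_mul_right_inj (hne i), ← minorIdeal_smul, h.minorIdeal_eq i hi,
      Ideal.span_singleton_mul_span_singleton, ← pow_mul, ← pow_add, ← hsum]
  · rw [← Ideal.span_singleton_mul_right_inj (hne (r + 1)), ← minorIdeal_smul,
      h.minorIdeal_succ_eq_bot, Ideal.mul_bot]

-- The rank `k` of `F` modulo `p` is the largest `k` with `s 0 + ⋯ + s (k - 1) = 0`.
theorem exists_pos_minorIdeal_eq_top {F : Matrix (Fin l) (Fin m) R} (h : HasPowMinors p r s F)
    (hr : 0 < r) (hs : s 0 = 0) :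
    ∃ k, 0 < k ∧ minorIdeal k F = ⊤ ∧ minorIdeal (k + 1) F ≤ Ideal.span {p} := by
  let P (k : ℕ) : Prop := ∑ j ∈ Finset.range k, s j = 0
  let k := Nat.findGreatest P r
  have hkr : k ≤ r := Nat.findGreatest_le r
  have hk : P k := Nat.findGreatest_spec (P := P) (Nat.zero_le r) (Finset.sum_range_zero s)
  refine ⟨k, Nat.le_findGreatest hr (by simpa [P] using hs), ?_, ?_⟩
  · rw [h.minorIdeal_eq k hkr, hk, pow_zero, Ideal.span_singleton_one]
  · obtain hlt | heq := hkr.lt_or_eq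
    · rw [h.minorIdeal_eq _ hlt, Ideal.span_singleton_le_span_singleton]
      exact dvd_pow_self p (Nat.findGreatest_is_greatest (P := P) (Nat.lt_succ_self k) hlt)
    · rw [heq, h.minorIdeal_succ_eq_bot]
      exact bot_le

end HasPowMinors

section Reduction

variable {A : Type u} {B : Type v} [CommRing A] [IsDomain A] [CommRing B] [IsDomain B] {p : A}
  {π : A →+* B} {r : ℕ} {s : ℕ → ℕ} {l m : ℕ}

theorem HasPowMinors.exists_matrixEquiv_unitCorner (hp : p ≠ 0) (hπ : Function.Surjective π)
    (hker : RingHom.ker π = Ideal.span {p}) (hlift : LiftsUnimodularVectors π)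
    (hA : ProjectivesAreFree A) (hA' : IsHermiteRing A) (hB : ProjectivesAreFree B)
    {F : Matrix (Fin (l + 1)) (Fin (m + 1)) A} (hF : HasPowMinors p r s F) (hr : 0 < r)
    (hs : s 0 = 0) : ∃ G : Matrix (Fin l) (Fin m) A, MatrixEquiv F (unitCorner G) := by
  obtain ⟨k, hk, htop, hle⟩ := hF.exists_pos_minorIdeal_eq_top hr hs
  obtain ⟨v, hv⟩ := exists_isUnimodular_mulVec hp hπ hker hlift hA hB (hF.minorIdeal_eq r le_rfl)
    hF.minorIdeal_succ_eq_bot hk htop hle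
  exact hA'.exists_matrixEquiv_unitCorner hv

theorem HasPowMinors.matrixEquiv_powDiagonal (hp : p ≠ 0) (hπ : Function.Surjective π)
    (hker : RingHom.ker π = Ideal.span {p}) (hlift : LiftsUnimodularVectors π)
    (hA : ProjectivesAreFree A) (hA' : IsHermiteRing A) (hB : ProjectivesAreFree B)
    {F : Matrix (Fin l) (Fin m) A} (hF : HasPowMinors p r s F) (hs : Monotone s) :
    MatrixEquiv F (powDiagonal p r s l m) := by
  induction r generalizing s l m with
  | zero => exact hF.matrixEquiv_zero
  | succ r ih =>
    obtain ⟨a, b, -⟩ := hF.exists_apply_ne_zero hp r.succ_pos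
    obtain _ | l := l
    · exact a.elim0
    obtain _ | m := m
    · exact b.elim0
    obtain ⟨F', rfl, hF'⟩ := hF.exists_eq_pow_smul hp hs r.succ_pos
    have hs' : Monotone fun i => s (i + 1) - s 0 :=
      fun i j hij => Nat.sub_le_sub_right (hs (Nat.succ_le_succ hij)) _
    obtain ⟨G, hG⟩ := hF'.exists_matrixEquiv_unitCorner hp hπ hker hlift hA hA' hB r.succ_pos
      (Nat.sub_self _)
    have hF'G := hG.trans
      (ih ((hF'.of_matrixEquiv hG).of_unitCorner (Nat.sub_self _)) hs').unitCorner_congr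
    rw [unitCorner_powDiagonal p r (s := fun i => s i - s 0) (Nat.sub_self _)] at hF'G
    have hsmul := hF'G.smul (p ^ s 0)
    rw [smul_powDiagonal] at hsmul
    simpa only [Nat.add_sub_cancel' (hs (Nat.zero_le _))] using hsmul

end Reduction

end SmithForm

/-! ### Reduction modulo a polynomial in the first variable -/

section PolyReduction

open MvPolynomial

variable (K : Type*) [Field K] (n : ℕ)

/-- The isomorphism `K[x₀, …, xₙ] ≃ K[x₀][x₁, …, xₙ]`, which makes the first variable a scalar
(`MvPolynomial.finSuccEquiv` does the opposite). -/
noncomputable def finSuccEquivRight :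
    MvPolynomial (Fin (n + 1)) K ≃ₐ[K] MvPolynomial (Fin n) (Polynomial K) :=
  (renameEquiv K (_root_.finSuccEquiv n)).trans (optionEquivRight K (Fin n))

theorem finSuccEquivRight_polyImage (p : Polynomial K) :
    finSuccEquivRight K n (polyImage n p) = C p := by
  have hcomp : (finSuccEquivRight K n).toAlgHom.comp (Polynomial.aeval (X 0)) =
      IsScalarTower.toAlgHom K (Polynomial K) (MvPolynomial (Fin n) (Polynomial K)) := by
    apply Polynomial.algHom_ext
    simp [finSuccEquivRight, algebraMap_eq]
  exact DFunLike.congr_fun hcomp p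

variable {K}

theorem polyImage_ne_zero {p : Polynomial K} (hp : p ≠ 0) : polyImage n p ≠ 0 := fun h => by
  have hC := finSuccEquivRight_polyImage K n p
  rw [h, map_zero, eq_comm, C_eq_zero] at hC
  exact hp hC

/-- The reduction homomorphism of `K[x₀, …, xₙ]` modulo a polynomial `p ∈ K[x₀]`, with target
presented as a polynomial ring over `K[x₀] / (p)`. -/
noncomputable def polyReduction (p : Polynomial K) :
    MvPolynomial (Fin (n + 1)) K →+* MvPolynomial (Fin n) (AdjoinRoot p) :=
  (map (AdjoinRoot.mk p)).comp (finSuccEquivRight K n : _ →+* _)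

theorem polyReduction_surjective (p : Polynomial K) : Function.Surjective (polyReduction n p) :=
  (map_surjective _ AdjoinRoot.mk_surjective).comp (finSuccEquivRight K n).surjective

theorem ker_polyReduction (p : Polynomial K) :
    RingHom.ker (polyReduction n p) = Ideal.span {polyImage n p} := by
  have hmk : RingHom.ker (AdjoinRoot.mk p) = Ideal.span {p} := by
    ext q
    rw [RingHom.mem_ker, AdjoinRoot.mk_eq_zero, Ideal.mem_span_singleton]
  ext f
  rw [RingHom.mem_ker, polyReduction, RingHom.comp_apply, ← RingHom.mem_ker, ker_map,
    hmk, Ideal.map_span, Set.image_singleton,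
    ← finSuccEquivRight_polyImage, Ideal.mem_span_singleton, Ideal.mem_span_singleton]
  exact map_dvd_iff (finSuccEquivRight K n)

theorem liftsUnimodularVectors_polyReduction (p : Polynomial K) [Fact (Irreducible p)] :
    LiftsUnimodularVectors (polyReduction n p) := fun ρ v hv =>
  (LiftableOrbit.single_of_mvPolynomial (φ := AdjoinRoot.mk p) AdjoinRoot.mk_surjective
    (zero_ne_one (α := Fin (ρ + 2))) hv).map (finSuccEquivRight K n).symm.toRingEquiv.toRingHom
    (RingHom.id _) (RingHom.ext fun f => by simp [polyReduction])

end PolyReduction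

/-! ### Reduced minors -/

section ReducedMinors

open Matrix

variable {R : Type*} [CommRing R] {l m i : ℕ} {F : Matrix (Fin l) (Fin m) R} {d : R}

theorem ReducedMinorsUnitIdeal.minorIdeal_eq_span [IsDomain R] (h : ReducedMinorsUnitIdeal i F)
    (hd : IsGcdOf d (minorsSet i F)) : minorIdeal i F = Ideal.span {d} := by
  obtain ⟨e, he, hspan⟩ := h
  have hde : Ideal.span {d} = Ideal.span {e} :=
    Ideal.span_singleton_eq_span_singleton.2 (associated_of_dvd_dvd (he.2 d hd.1) (hd.2 e he.1))
  rw [hde, minorIdeal_eq_span_minorsSet]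
  apply le_antisymm
  · rw [Ideal.span_le]
    exact fun a ha => Ideal.mem_span_singleton.2 (he.1 a ha)
  · rw [← Ideal.mul_top (Ideal.span {e}), ← hspan, Ideal.span_mul_span', Ideal.span_le]
    rintro _ ⟨_, rfl, b, hb, rfl⟩
    exact Ideal.subset_span hb

theorem reducedMinorsUnitIdeal_of_mem_minorIdeal [IsDomain R] (hd0 : d ≠ 0)
    (hd : IsGcdOf d (minorsSet i F)) (h : d ∈ minorIdeal i F) : ReducedMinorsUnitIdeal i F := by
  have hle : minorIdeal i F ≤ Ideal.span {d} * Ideal.span {b | d * b ∈ minorsSet i F} := by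
    rw [minorIdeal_eq_span_minorsSet, Ideal.span_le]
    intro a ha
    obtain ⟨b, rfl⟩ := hd.1 a ha
    exact Ideal.mul_mem_mul (Ideal.mem_span_singleton_self d) (Ideal.subset_span ha)
  refine ⟨d, hd, ?_⟩
  rw [← Ideal.span_singleton_mul_right_inj hd0, Ideal.mul_top]
  exact le_antisymm Ideal.mul_le_left ((Ideal.span_singleton_le_iff_mem _).2 (hle h))

theorem pow_sum_mem_minorIdeal_powDiagonal (p : R) {r : ℕ} (s : ℕ → ℕ) (hi : i ≤ r) (hl : i ≤ l)
    (hm : i ≤ m) : p ^ ∑ j ∈ Finset.range i, s j ∈ minorIdeal i (powDiagonal p r s l m) := by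
  have hdiag : (powDiagonal p r s l m).submatrix (Fin.castLE hl) (Fin.castLE hm) =
      diagonal fun j : Fin i => p ^ s j := by
    ext a b
    simp [powDiagonal, diagonal_apply, Fin.ext_iff, a.2.trans_le hi]
  have hmem := det_submatrix_mem_minorIdeal (powDiagonal p r s l m) (Fin.castLE hl) (Fin.castLE hm)
  rwa [hdiag, det_diagonal, Finset.prod_pow_eq_pow_sum, Fin.sum_univ_eq_sum_range] at hmem

end ReducedMinors

theorem matrixEquiv_powDiagonal_iff {K : Type*} [Field K] {n l m : ℕ} {p : Polynomial K}
    (hp : Irreducible p) {F : Matrix (Fin l) (Fin m) (MvPolynomial (Fin (n + 1)) K)} {s : ℕ → ℕ}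
    (hs : Monotone s) (hgcd : ∀ i, 1 ≤ i → i ≤ F.rank →
      IsGcdOf (polyImage n p ^ ∑ j ∈ Finset.range i, s j) (minorsSet i F)) :
    MatrixEquiv F (powDiagonal (polyImage n p) F.rank s l m) ↔
      ∀ i, 1 ≤ i → i ≤ F.rank → ReducedMinorsUnitIdeal i F := by
  have : Fact (Irreducible p) := ⟨hp⟩
  have hp0 : polyImage n p ≠ 0 := polyImage_ne_zero n hp.ne_zero
  refine ⟨fun h i h1 hi => ?_, fun h => ?_⟩
  · refine reducedMinorsUnitIdeal_of_mem_minorIdeal (pow_ne_zero _ hp0) (hgcd i h1 hi) ?_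
    rw [h.minorIdeal_eq]
    exact pow_sum_mem_minorIdeal_powDiagonal _ s hi (hi.trans F.rank_le_height)
      (hi.trans F.rank_le_width)
  · have hF : HasPowMinors (polyImage n p) F.rank s F := by
      refine ⟨fun i hi => ?_, minorIdeal_rank_succ F⟩
      obtain rfl | h1 := Nat.eq_zero_or_pos i
      · simp [minorIdeal_zero_left]
      · exact (h i h1 hi).minorIdeal_eq_span (hgcd i h1 hi)
    exact hF.matrixEquiv_powDiagonal hp0 (polyReduction_surjective n p) (ker_polyReduction n p)
      (liftsUnimodularVectors_polyReduction n p) (projectivesAreFree_mvPolynomial K (n + 1))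
      (isHermiteRing_mvPolynomial K (n + 1)) (projectivesAreFree_mvPolynomial (AdjoinRoot p) n) hs

theorem exists_monotone_eq_comp_val {α : Type*} [Preorder α] {r : ℕ} (hr : 0 < r)
    {s : Fin r → α} (hs : Monotone s) : ∃ s' : ℕ → α, Monotone s' ∧ s = fun i : Fin r => s' i := by
  refine ⟨fun j => s ⟨min j (r - 1), by omega⟩,
    fun i j hij => hs (Fin.mk_le_mk.2 (min_le_min_right _ hij)), ?_⟩
  ext i
  congr 1
  ext
  simp only
  omega

theorem sum_Iic_eq_sum_range {M : Type*} [AddCommMonoid M] {r : ℕ} (s : ℕ → M) (i : Fin r) :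
    ∑ j ∈ Finset.Iic i, s j = ∑ j ∈ Finset.range (i + 1), s j := by
  rw [Nat.range_succ_eq_Iic, ← Fin.map_valEmbedding_Iic, Finset.sum_map]
  rfl

/-- let `F ∈ A^{l×m}` with `rank F = r > 0` and `d_r(F) = p^t`
up to a unit (`p ∈ K[x₁]` irreducible, `t ≥ 1`), and Smith form with
`diag(p^{s₁}, …, p^{s_r})` (`s₁ ≤ ⋯ ≤ s_r`) in the upper-left `r × r` corner and
zeros elsewhere (i.e. `d_i(F) = p^{s₁ + ⋯ + s_i}` up to associates for `i ≤ r`).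
Then `F` is equivalent to its Smith form iff `J_i(F) = A` for `i = 1, …, r`. -/
theorem stmt11 {K : Type*} [Field K] {n l m r : ℕ} (hr : 0 < r)
    (p : Polynomial K) (hp : Irreducible p) (t : ℕ) (ht : 0 < t)
    (F : Matrix (Fin l) (Fin m) (MvPolynomial (Fin (n + 1)) K))
    (hrank : F.rank = r)
    (hdr : IsGcdOf (polyImage n p ^ t) (minorsSet r F))
    (s : Fin r → ℕ) (hs : Monotone s)
    (hSmith : ∀ i : Fin r,
      IsGcdOf (polyImage n p ^ (∑ j ∈ Finset.Iic i, s j)) (minorsSet ((i : ℕ) + 1) F)) :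
    MatrixEquiv F
      (Matrix.of (fun (i : Fin l) (j : Fin m) =>
        if h : (i : ℕ) = (j : ℕ) ∧ (i : ℕ) < r
          then polyImage n p ^ s ⟨i, h.2⟩ else 0)) ↔
      ∀ i : ℕ, 1 ≤ i → i ≤ r → ReducedMinorsUnitIdeal i F := by
  subst hrank
  obtain ⟨s, hs', rfl⟩ := exists_monotone_eq_comp_val hr hs
  have hdiag : Matrix.of (fun (i : Fin l) (j : Fin m) =>
      if _h : (i : ℕ) = (j : ℕ) ∧ (i : ℕ) < F.rank then polyImage n p ^ s i else 0) =
      powDiagonal (polyImage n p) F.rank s l m := by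
    ext1 i j
    simp [powDiagonal]
  have hgcd (i : ℕ) (h1 : 1 ≤ i) (hi : i ≤ F.rank) :
      IsGcdOf (polyImage n p ^ ∑ j ∈ Finset.range i, s j) (minorsSet i F) := by
    obtain ⟨i, rfl⟩ := Nat.exists_eq_add_of_le' h1
    rw [← sum_Iic_eq_sum_range s ⟨i, hi⟩]
    exact hSmith ⟨i, hi⟩
  rw [hdiag]
  exact matrixEquiv_powDiagonal_iff hp hs' hgcd
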